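/- arXiv:math/0508172 — 4 statements merged into one kernel-verified Lean document; each statement's English description precedes it below -/
import Mathlib

section
/- If (G, 𝓐) is a local convergence pairing on a Peano continuum X without cut points, then for each A ∈ 𝓐 the stabilizer st(A) = {g ∈ G : g(A) = A} acts as a convergence group on X. -/
/-!
The proof gives more: all of `G` acts as a convergence group on `X`.

Instead of passing to subsequences, follow group elements along a nonprincipal ultrafilter `𝒰` on
`G`. By nullity every `B ∈ 𝓐` does one of two things: its translates shrink to a point `p`, or
they are eventually a constant set `B'`, and then the convergence property of `st(B)` makes the
maps `g : B → B'` converge to some `p ∈ B'` away from a repeller `n ∈ B`.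

All members of `𝓐` have the same attractor. It suffices to compare two that cross, `B` attracted to
`p` and `C`. If the repeller of `B` is not in `C`, then by local connectedness the translates of `C`
accumulate at `p`. If `B` and `C` have a common point that is neither of their repellers, it is
carried to both attractors. The remaining case is that `B ∩ C` consists of the repeller of `B`, or
of the point carried onto `p`, or of both. Then condition (5) yields a crossing sequence from `C`
to `B` avoiding these points. Its intermediate terms accumulate at `p` one after the other, and they
all shrink to `p`, because a constant translate containing `p` would make the term contain one of
the avoided points.

Applied to `𝒰⁻¹`, the same fact gives a common point `n` to which all members are attracted under
inversion. If `x ≠ n` and `y ≠ p`, finitely many members of `𝓐` separate `y` from `p`; they miss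
`p`, so their union `E` is pulled back into any neighbourhood of `n`. As `n` is not a cut point, a
connected set away from `n` joins `x` to a point carried to `p`; its translates avoid `E`, so points
near `x` are not carried near `y`. Compactness of `X` finishes the proof.
-/

open Set Filter Topology Pointwise

/-- The set `E` separates the points `x` and `y`: both lie outside `E` and in
different connected components of the complement of `E`. -/
def SepPts {X : Type*} [TopologicalSpace X] (E : Set X) (x y : X) : Prop :=
  x ∉ E ∧ y ∉ E ∧ connectedComponentIn Eᶜ x ≠ connectedComponentIn Eᶜ y

/-- The set `E` separates the set `Y ⊆ X \ E`: two points of `Y` lie in different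
connected components of the complement of `E`. -/
def SepSet {X : Type*} [TopologicalSpace X] (E Y : Set X) : Prop :=
  Y ⊆ Eᶜ ∧ ∃ x ∈ Y, ∃ y ∈ Y, connectedComponentIn Eᶜ x ≠ connectedComponentIn Eᶜ y

/-- Two (closed) sets `A` and `B` cross: they intersect, or each separates the other. -/
def Crosses {X : Type*} [TopologicalSpace X] (A B : Set X) : Prop :=
  (A ∩ B).Nonempty ∨ (SepSet A B ∧ SepSet B A)

/-- There is a (finite) crossing sequence in `𝓐` from `A` to `B`. -/
def CrossSeqFromTo {X : Type*} [TopologicalSpace X] (𝓐 : Set (Set X)) (A B : Set X) : Prop :=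
  ∃ (n : ℕ) (c : ℕ → Set X), c 0 = A ∧ c n = B ∧ (∀ i ≤ n, c i ∈ 𝓐) ∧
    ∀ i < n, Crosses (c i) (c (i + 1))

/-- A collection `𝓐` is cross-connected: any two of its elements are joined by a
crossing sequence in `𝓐`. -/
def CrossConnected {X : Type*} [TopologicalSpace X] (𝓐 : Set (Set X)) : Prop :=
  ∀ A ∈ 𝓐, ∀ B ∈ 𝓐, CrossSeqFromTo 𝓐 A B

/-- There is a crossing sequence `A, A_1, …, A_n, B` in `𝓐` (with `n ≥ 1`) whose
intermediate terms `A_1, …, A_n` are disjoint from `D`. -/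
def CrossSeqAvoiding {X : Type*} [TopologicalSpace X] (𝓐 : Set (Set X)) (A B D : Set X) :
    Prop :=
  ∃ n : ℕ, 1 ≤ n ∧ ∃ c : ℕ → Set X, c 0 = A ∧ c (n + 1) = B ∧ (∀ i ≤ n + 1, c i ∈ 𝓐) ∧
    (∀ i ≤ n, Crosses (c i) (c (i + 1))) ∧ ∀ i, 1 ≤ i → i ≤ n → c i ∩ D = ∅

/-- A collection of subsets of a metric space is null if for every `ε > 0` only finitely
many of its members have diameter greater than `ε`. -/
def NullFam {X : Type*} [PseudoMetricSpace X] (𝓐 : Set (Set X)) : Prop :=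
  ∀ ε : ℝ, 0 < ε → {A ∈ 𝓐 | ε < Metric.diam A}.Finite

/-- A collection `𝓐` is fine if any two distinct points are separated by the union of
some finite subcollection of `𝓐`. -/
def FineFam {X : Type*} [PseudoMetricSpace X] (𝓐 : Set (Set X)) : Prop :=
  ∀ x y : X, x ≠ y → ∃ 𝓑 ⊆ 𝓐, 𝓑.Finite ∧ SepPts (⋃₀ 𝓑) x y

/-- A sequence of maps `T i : X → X` acts as a convergence sequence on the subset `A`,
with repeller `n ∈ A` and attractor `p ∈ A`: for every compact `C ⊆ A \ {n}` and every
open neighborhood `U` of `p`, eventually `T i '' C ⊆ U`. -/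
def ConvSeqOn {X : Type*} [TopologicalSpace X] (A : Set X) (T : ℕ → X → X) (n p : X) :
    Prop :=
  n ∈ A ∧ p ∈ A ∧ ∀ C : Set X, C ⊆ A → IsCompact C → n ∉ C →
    ∀ U : Set X, IsOpen U → p ∈ U → ∀ᶠ i in atTop, T i '' C ⊆ U

/-- The stabilizer of a subset `A ⊆ X` in `G`. -/
def stab (G : Type*) {X : Type*} [Group G] [MulAction G X] (A : Set X) : Set G :=
  {g : G | g • A = A}

/-- The subset `S` of the group `G` acts as a convergence group on `A ⊆ X`: every
sequence of distinct elements of `S` has a subsequence acting as a convergence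
sequence on `A`. -/
def ConvGroupOn {G X : Type*} [Group G] [MulAction G X] [TopologicalSpace X]
    (S : Set G) (A : Set X) : Prop :=
  ∀ g : ℕ → G, (∀ i, g i ∈ S) → Function.Injective g →
    ∃ k : ℕ → ℕ, StrictMono k ∧ ∃ n p : X,
      ConvSeqOn A (fun i => (g (k i) • · : X → X)) n p

/-- `(G, 𝓐)` is a local convergence pairing on `X`. -/
structure IsLocalConvPairing (G : Type*) {X : Type*} [Group G] [MulAction G X]
    [MetricSpace X] (𝓐 : Set (Set X)) : Prop where
  closed : ∀ A ∈ 𝓐, IsClosed A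
  invariant : ∀ g : G, ∀ A ∈ 𝓐, g • A ∈ 𝓐
  big : ∀ A ∈ 𝓐, 2 < A.encard
  null : NullFam 𝓐
  fine : FineFam 𝓐
  stabConv : ∀ A ∈ 𝓐, ConvGroupOn (stab G A) A
  connect : ∀ A ∈ 𝓐, ∀ B ∈ 𝓐, (A ∩ B).encard ≤ 2 →
    (∀ c : X, A ∩ B = {c} → ∀ b ∈ B, b ≠ c → CrossSeqAvoiding 𝓐 A B {b, c}) ∧
    ((¬ ∃ c : X, A ∩ B = {c}) → CrossSeqAvoiding 𝓐 A B (A ∩ B))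

section Action

variable {G X : Type*} [Group G] [MulAction G X]

section Ultrafilter

variable [TopologicalSpace X] {l : Filter G} {𝒰 : Ultrafilter G} {S : Set G} {A B : Set X} {n p : X}

/-- Along `l`, the elements of `G` carry `B` to `p` uniformly away from `n`: the filter version of
`ConvSeqOn`, for which neither point is required to lie in `B`. -/
def TendstoAway (l : Filter G) (B : Set X) (n p : X) : Prop :=
  ∀ W ∈ 𝓝 n, ∀ U ∈ 𝓝 p, ∀ᶠ g in l, ∀ x ∈ B, x ∉ W → g • x ∈ U

theorem TendstoAway.tendsto_smul [T1Space X] (h : TendstoAway l B n p) {x : X} (hx : x ∈ B)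
    (hxn : x ≠ n) : Tendsto (fun g : G => g • x) l (𝓝 p) := fun U hU =>
  (h {x}ᶜ (compl_singleton_mem_nhds hxn.symm) U hU).mono fun _ hg => hg x hx (by simp)

theorem TendstoAway.of_map_mul_left [ContinuousConstSMul G X] {a : G}
    (h : TendstoAway (l.map (a * ·)) B n p) : TendstoAway l B n (a⁻¹ • p) := by
  intro W hW U hU
  have hpre : (a⁻¹ • · : X → X) ⁻¹' U ∈ 𝓝 p := (continuous_const_smul a⁻¹).continuousAt hU
  filter_upwards [eventually_map.1 (h W hW _ hpre)] with g hg x hx hxW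
  simpa [mul_smul] using hg x hx hxW

theorem ConvSeqOn.eventually_forall_mem {T : ℕ → X → X} (hB : IsCompact B) (h : ConvSeqOn B T n p)
    {W U : Set X} (hW : W ∈ 𝓝 n) (hU : U ∈ 𝓝 p) : ∀ᶠ i in atTop, ∀ x ∈ B, x ∉ W → T i x ∈ U := by
  obtain ⟨-, -, hconv⟩ := h
  filter_upwards [hconv (B \ interior W) sdiff_subset (hB.diff isOpen_interior)
    (fun hn => hn.2 (mem_interior_iff_mem_nhds.2 hW)) _ isOpen_interior
    (mem_interior_iff_mem_nhds.2 hU)] with i hi x hx hxW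
  exact interior_subset (hi ⟨x, ⟨hx, fun hxi => hxW (interior_subset hxi)⟩, rfl⟩)

theorem ConvGroupOn.exists_convSeqOn_of_infinite (hS : ConvGroupOn S B) {T : Set G} (hTS : T ⊆ S)
    (hT : T.Infinite) : ∃ k : ℕ → G, (∀ i, k i ∈ T) ∧
      ∃ n p, ConvSeqOn B (fun i => (k i • · : X → X)) n p := by
  let e := hT.natEmbedding
  obtain ⟨k, -, hk⟩ := hS (fun i => (e i : G)) (fun i => hTS (e i).2)
    (Subtype.val_injective.comp e.injective)
  exact ⟨fun i => e (k i), fun i => (e (k i)).2, hk⟩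

/-- The pairs `(n, p)` arising from sequences in a member `T` of `𝒰` form a nonempty set `Q T`; by
compactness some pair lies in the closure of every `Q T`, and it works for `𝒰`. -/
theorem ConvGroupOn.exists_tendstoAway (hB : IsCompact B) (hS : ConvGroupOn S B)
    (hle : ↑𝒰 ≤ (cofinite : Filter G)) (hS𝒰 : S ∈ 𝒰) :
    ∃ n ∈ B, ∃ p ∈ B, TendstoAway (𝒰 : Filter G) B n p := by
  let Q (T : Set G) : Set (X × X) := {q | ∃ k : ℕ → G, (∀ i, k i ∈ T) ∧
    ConvSeqOn B (fun i => (k i • · : X → X)) q.1 q.2}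
  have hQ : ∀ T ∈ 𝒰, (B ×ˢ B ∩ Q T).Nonempty := by
    intro T hT
    have hST : ∀ᶠ g in (𝒰 : Filter G), g ∈ S ∩ T := inter_mem hS𝒰 hT
    have hinf : (S ∩ T).Infinite :=
      frequently_cofinite_iff_infinite.1 (hST.frequently.filter_mono hle)
    obtain ⟨k, hk, n, p, hnp⟩ := hS.exists_convSeqOn_of_infinite inter_subset_left hinf
    exact ⟨(n, p), ⟨hnp.1, hnp.2.1⟩, k, fun i => (hk i).2, hnp⟩
  obtain ⟨⟨n, p⟩, ⟨hn, hp⟩, hcl⟩ : (B ×ˢ B ∩ ⋂ T : {T // T ∈ 𝒰}, closure (Q T)).Nonempty := by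
    refine (hB.prod hB).inter_iInter_nonempty _ (fun _ => isClosed_closure) fun u => ?_
    refine (hQ (⋂ T ∈ u, (T : Set G)) ((biInter_finset_mem u).2 fun T _ => T.2)).mono
      (inter_subset_inter_right _ (subset_iInter₂ fun T hT => ?_))
    rintro q ⟨k, hk, hkq⟩
    exact subset_closure ⟨k, fun i => mem_iInter₂.1 (hk i) T hT, hkq⟩
  refine ⟨n, hn, p, hp, fun W hW U hU => ?_⟩
  by_contra hWU
  let T : Set G := {g | ¬ ∀ x ∈ B, x ∉ W → g • x ∈ U}
  have hT : T ∈ 𝒰 := Ultrafilter.eventually_not.2 hWU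
  obtain ⟨q, ⟨hqW, hqU⟩, k, hk, hkq⟩ := mem_closure_iff_nhds.1 (mem_iInter.1 hcl ⟨T, hT⟩) _
    (prod_mem_nhds (interior_mem_nhds.2 hW) (interior_mem_nhds.2 hU))
  obtain ⟨i, hi⟩ := (hkq.eventually_forall_mem hB (mem_interior_iff_mem_nhds.1 hqW)
    (mem_interior_iff_mem_nhds.1 hqU)).exists
  exact hk i hi

theorem convGroupOn_of_forall_ultrafilter [T2Space X] [FirstCountableTopology X]
    (H : ∀ 𝒰 : Ultrafilter G, ↑𝒰 ≤ (cofinite : Filter G) → S ∈ 𝒰 →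
      ∃ n ∈ A, ∃ p ∈ A, TendstoAway (𝒰 : Filter G) A n p) : ConvGroupOn S A := by
  intro g hgS hg
  obtain ⟨n, hn, p, hp, hconv⟩ := H ((hyperfilter ℕ).map g)
    ((map_mono hyperfilter_le_cofinite).trans hg.tendsto_cofinite)
    (Ultrafilter.mem_map.2 (univ_mem' hgS))
  obtain ⟨W, hW⟩ := (𝓝 n).exists_antitone_basis
  obtain ⟨U, hU⟩ := (𝓝 p).exists_antitone_basis
  have hfreq : ∀ m, ∃ᶠ i in atTop, ∀ x ∈ A, x ∉ W m → g i • x ∈ U m := fun m =>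
    (eventually_map.1 (hconv _ (hW.mem m) _ (hU.mem m))).frequently.filter_mono
      Nat.hyperfilter_le_atTop
  obtain ⟨k, hk, hkWU⟩ := extraction_forall_of_frequently hfreq
  refine ⟨k, hk, n, p, hn, hp, fun C hCA hC hnC V hVo hpV => ?_⟩
  filter_upwards [tendsto_smallSets_iff.1 hW.tendsto_smallSets _ (hC.isClosed.compl_mem_nhds hnC),
    tendsto_smallSets_iff.1 hU.tendsto_smallSets _ (hVo.mem_nhds hpV)] with m hWm hUm
  rintro _ ⟨x, hxC, rfl⟩
  exact hUm (hkWU m x (hCA hxC) fun hxW => hWm hxW hxC)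

theorem ConvGroupOn.mono {S' : Set G} (hS : ConvGroupOn S A) (h : S' ⊆ S) : ConvGroupOn S' A :=
  fun g hg => hS g fun i => h (hg i)

end Ultrafilter

theorem exists_mem_ne_ne {α : Type*} {s : Set α} (hs : 2 < s.encard) (a b : α) :
    ∃ x ∈ s, x ≠ a ∧ x ≠ b := by
  by_contra! H
  have hsub : s ⊆ {a, b} := fun x hx => or_iff_not_imp_left.2 (H x hx)
  have hpair : ({a, b} : Set α).encard ≤ 2 := by
    simpa [one_add_one_eq_two] using encard_insert_le {b} a
  exact hs.not_ge ((encard_le_encard hsub).trans hpair)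

/-- The points to be avoided when comparing with a set of repeller `n` and attractor `p`: the
repeller, and the point (if any) that `g` carries onto `p` eventually along `l`. -/
def exceptionalSet (l : Filter G) (n p : X) : Set X :=
  insert n {d | ∀ᶠ g in l, g • d = p}

theorem encard_exceptionalSet_le {l : Filter G} [l.NeBot] {n p : X} :
    (exceptionalSet l n p).encard ≤ 2 := by
  have hsub : {d : X | ∀ᶠ g in l, g • d = p}.encard ≤ 1 := by
    refine encard_le_one_iff.2 fun d e hd he => ?_
    obtain ⟨g, hgd, hge⟩ := (Eventually.and hd he).exists
    exact smul_left_cancel g (hgd.trans hge.symm)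
  exact (encard_insert_le _ _).trans (by simpa [one_add_one_eq_two] using add_le_add_left hsub 1)

section Attraction

variable [TopologicalSpace X] {l : Filter G} {B B' C C' : Set X} {m n p q r : X}

/-- The translates of `B` are shrunk to the point `p` along `l`. -/
def ShrinksTo (l : Filter G) (B : Set X) (p : X) : Prop :=
  Tendsto (fun g : G => g • B) l (𝓝 p).smallSets

/-- Every neighbourhood of `p` meets the translates of `B` eventually along `l`. -/
def AccumulatesAt (l : Filter G) (B : Set X) (p : X) : Prop :=
  ∀ V ∈ 𝓝 p, ∀ᶠ g in l, (g • B ∩ V).Nonempty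

/-- Along `l` the translates of `B` are the constant set `B'`, and the maps `g : B → B'` converge
to the attractor `p ∈ B'` uniformly away from the repeller `n ∈ B`. -/
structure ConvergesTo (l : Filter G) (B B' : Set X) (n p : X) : Prop where
  eventually_smul_eq : ∀ᶠ g in l, g • B = B'
  repeller_mem : n ∈ B
  attractor_mem : p ∈ B'
  tendstoAway : TendstoAway l B n p

/-- `p` attracts `B` along `l` in one of the two ways open to the members of a local convergence
pairing. -/
def IsAttractor (l : Filter G) (B : Set X) (p : X) : Prop :=
  ShrinksTo l B p ∨ ∃ B' n, ConvergesTo l B B' n p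

theorem eventually_eq_of_tendsto_of_mem_finite {ι : Type*} {f : Filter ι} [T1Space X] {F : Set X}
    (hF : F.Finite) {u : ι → X} (hu : Tendsto u f (𝓝 p)) (hmem : ∀ᶠ i in f, u i ∈ F) :
    ∀ᶠ i in f, u i = p := by
  have hnear : (F \ {p})ᶜ ∈ 𝓝 p := (hF.sdiff.isClosed.compl_mem_nhds fun hp => hp.2 rfl)
  filter_upwards [hu hnear, hmem] with i hi hiF
  by_contra hne
  exact hi ⟨hiF, hne⟩

theorem ShrinksTo.eventually_subset (f : ShrinksTo l B p) {V : Set X} (hV : V ∈ 𝓝 p) :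
    ∀ᶠ g in l, g • B ⊆ V :=
  tendsto_smallSets_iff.1 f V hV

theorem ShrinksTo.tendsto_smul (f : ShrinksTo l B p) {x : X} (hx : x ∈ B) :
    Tendsto (fun g : G => g • x) l (𝓝 p) := fun _ hV =>
  (f.eventually_subset hV).mono fun _ hg => hg (smul_mem_smul_set hx)

theorem ShrinksTo.sUnion {𝓑 : Set (Set X)} (hfin : 𝓑.Finite) (h : ∀ B ∈ 𝓑, ShrinksTo l B p) :
    ShrinksTo l (⋃₀ 𝓑) p := by
  refine tendsto_smallSets_iff.2 fun V hV => ?_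
  filter_upwards [(eventually_all_finite hfin).2 fun B hB => (h B hB).eventually_subset hV]
    with g hg
  rw [smul_set_sUnion]
  exact iUnion₂_subset hg

theorem ShrinksTo.eq_of_accumulatesAt [T2Space X] [l.NeBot] (f : ShrinksTo l B q)
    (hacc : AccumulatesAt l B p) : p = q := by
  by_contra hne
  obtain ⟨V, hV, U, hU, hd⟩ := Filter.disjoint_iff.1 (disjoint_nhds_nhds.2 hne)
  obtain ⟨g, hgU, x, hx, hxV⟩ := ((f.eventually_subset hU).and (hacc V hV)).exists
  exact disjoint_left.1 hd hxV (hgU hx)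

theorem ConvergesTo.inv (f : ConvergesTo l B B' n p) : ConvergesTo l⁻¹ B' B p n where
  eventually_smul_eq := eventually_inv.2 <| f.eventually_smul_eq.mono fun g hg => by
    rw [← hg, inv_smul_smul]
  repeller_mem := f.attractor_mem
  attractor_mem := f.repeller_mem
  tendstoAway W hW U hU := eventually_inv.2 <| by
    filter_upwards [f.eventually_smul_eq, f.tendstoAway U hU W hW] with g hg hc x hx hxW
    have hx' : g⁻¹ • x ∈ B := by rwa [← mem_smul_set_iff_inv_smul_mem, hg]
    by_contra hxU
    exact hxW (by simpa using hc _ hx' hxU)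

theorem ConvergesTo.tendsto_smul [T1Space X] (f : ConvergesTo l B B' n p) {x : X} (hx : x ∈ B)
    (hxn : x ≠ n) : Tendsto (fun g : G => g • x) l (𝓝 p) :=
  f.tendstoAway.tendsto_smul hx hxn

theorem IsAttractor.exists_forall_tendsto_smul [T1Space X] (f : IsAttractor l B p) :
    ∃ m, ∀ x ∈ B, x ≠ m → Tendsto (fun g : G => g • x) l (𝓝 p) := by
  rcases f with f | ⟨B', m, f⟩
  · exact ⟨p, fun x hx _ => f.tendsto_smul hx⟩
  · exact ⟨m, fun x hx hxm => f.tendsto_smul hx hxm⟩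

theorem IsAttractor.unique [T2Space X] [l.NeBot] (f : IsAttractor l B p) (f' : IsAttractor l B q)
    (hB : 2 < B.encard) : p = q := by
  obtain ⟨m, hm⟩ := f.exists_forall_tendsto_smul
  obtain ⟨m', hm'⟩ := f'.exists_forall_tendsto_smul
  obtain ⟨x, hx, hxm, hxm'⟩ := exists_mem_ne_ne hB m m'
  exact tendsto_nhds_unique (hm x hx hxm) (hm' x hx hxm')

theorem ConvergesTo.isClosed_image [ContinuousConstSMul G X] [l.NeBot]
    (f : ConvergesTo l B B' n p) (hB : IsClosed B) : IsClosed B' := by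
  obtain ⟨g, hg⟩ := f.eventually_smul_eq.exists
  exact hg ▸ hB.smul g

theorem ConvergesTo.mem_of_accumulatesAt [l.NeBot] (f : ConvergesTo l B B' n q)
    (hB' : IsClosed B') (hacc : AccumulatesAt l B p) : p ∈ B' := by
  by_contra hp
  obtain ⟨g, hg, x, hx, hxB'⟩ :=
    (f.eventually_smul_eq.and (hacc _ (hB'.compl_mem_nhds hp))).exists
  exact hxB' (hg ▸ hx)

theorem ConvergesTo.attractor_mem_of_mem_inter [T1Space X] [l.NeBot] (f : ConvergesTo l B B' n p)
    (f' : ConvergesTo l C C' m r) (hC' : IsClosed C') {x : X} (hx : x ∈ B ∩ C) (hxn : x ≠ n) :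
    p ∈ C' :=
  hC'.mem_of_tendsto (f.tendsto_smul hx.1 hxn) <|
    f'.eventually_smul_eq.mono fun _ hg => hg ▸ smul_mem_smul_set hx.2

theorem ConvergesTo.exists_mem_inter_of_attractor_mem [l.NeBot] (f : ConvergesTo l B B' n p)
    (f' : ConvergesTo l C C' m r) (hp : p ∈ C') : (B ∩ C).Nonempty := by
  obtain ⟨g, hgB, hgC⟩ := (f.eventually_smul_eq.and f'.eventually_smul_eq).exists
  exact ⟨g⁻¹ • p, mem_smul_set_iff_inv_smul_mem.1 (hgB ▸ f.attractor_mem),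
    mem_smul_set_iff_inv_smul_mem.1 (hgC ▸ hp)⟩

theorem ConvergesTo.exceptionalSet_subset [l.NeBot] (f : ConvergesTo l B B' n p) :
    exceptionalSet l n p ⊆ B := by
  refine insert_subset f.repeller_mem fun d hd => ?_
  obtain ⟨g, hgB, hgd⟩ := (f.eventually_smul_eq.and hd).exists
  rw [← smul_mem_smul_set_iff (a := g), hgB, hgd]
  exact f.attractor_mem

theorem ConvergesTo.inter_subset_exceptionalSet [T1Space X] [l.NeBot]
    (f : ConvergesTo l B B' n p) (f' : ConvergesTo l C C' m r) (hfin : (B ∩ C).Finite) :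
    B ∩ C ⊆ exceptionalSet l n p := by
  intro x hx
  refine or_iff_not_imp_left.2 fun hxn => ?_
  obtain ⟨g₀, hg₀B, hg₀C⟩ := (f.eventually_smul_eq.and f'.eventually_smul_eq).exists
  have hfin' : (B' ∩ C').Finite := by
    rw [← hg₀B, ← hg₀C, ← smul_set_inter]
    exact hfin.smul_set
  refine eventually_eq_of_tendsto_of_mem_finite hfin' (f.tendsto_smul hx.1 hxn) ?_
  filter_upwards [f.eventually_smul_eq, f'.eventually_smul_eq] with g hgB hgC
  exact ⟨hgB ▸ smul_mem_smul_set hx.1, hgC ▸ smul_mem_smul_set hx.2⟩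

/-- Under inversion, a point of `B' ∩ C'` other than `p` is carried to `n`, which is not in `C`;
so `p` is the only such point, and every `g` carries one and the same point onto it. -/
theorem ConvergesTo.not_disjoint_exceptionalSet [T1Space X] [l.NeBot]
    (f : ConvergesTo l B B' n p) (f' : ConvergesTo l C C' m r) (hC : IsClosed C) (hp : p ∈ C') :
    ¬ Disjoint C (exceptionalSet l n p) := by
  intro hdisj
  have hn : n ∉ C := fun hn => disjoint_left.1 hdisj hn (mem_insert _ _)
  obtain ⟨d, hdB, hdC⟩ := f.exists_mem_inter_of_attractor_mem f' hp
  refine disjoint_left.1 hdisj hdC (Or.inr ?_)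
  filter_upwards [f.eventually_smul_eq, f'.eventually_smul_eq] with g hgB hgC
  by_contra hgd
  exact hn (f.inv.attractor_mem_of_mem_inter f'.inv hC
    ⟨hgB ▸ smul_mem_smul_set hdB, hgC ▸ smul_mem_smul_set hdC⟩ hgd)

/-- Two points of `B'` other than the attractor are pulled back to distinct points near `n`. -/
theorem ConvergesTo.accPt_repeller [T1Space X] [l.NeBot] (f : ConvergesTo l B B' n p)
    (hB : 2 < B.encard) : AccPt n (𝓟 B) := by
  refine accPt_iff_nhds.2 fun W hW => ?_
  obtain ⟨g₀, hg₀⟩ := f.eventually_smul_eq.exists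
  have hB' : 2 < B'.encard := by rwa [← hg₀, encard_smul_set]
  have hnear : ∀ u ∈ B', u ≠ p → ∀ᶠ g in l⁻¹, g • u ∈ W := fun u hu hup =>
    f.inv.tendsto_smul hu hup hW
  obtain ⟨u, hu, hup, -⟩ := exists_mem_ne_ne hB' p p
  obtain ⟨v, hv, hvp, hvu⟩ := exists_mem_ne_ne hB' p u
  obtain ⟨g, hg, hgu, hgv⟩ := (f.inv.eventually_smul_eq.and
    (hnear u hu hup |>.and (hnear v hv hvp))).exists
  by_cases hgun : g • u = n
  · exact ⟨g • v, ⟨hgv, hg ▸ smul_mem_smul_set hv⟩,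
      fun hgvn => hvu (smul_left_cancel g (hgvn.trans hgun.symm))⟩
  · exact ⟨g • u, ⟨hgu, hg ▸ smul_mem_smul_set hu⟩, hgun⟩

end Attraction

section Crossing

variable [TopologicalSpace X] {l : Filter G} {𝓐 : Set (Set X)} {B B' C C' D D' : Set X}
  {m n p q x y : X}

theorem connectedComponentIn_inv_smul_eq [ContinuousConstSMul G X] {K : Set X}
    (hK : IsPreconnected K) (hx : x ∈ K) (hy : y ∈ K) {g : G} (hg : Disjoint (g • C) K) :
    connectedComponentIn Cᶜ (g⁻¹ • x) = connectedComponentIn Cᶜ (g⁻¹ • y) := by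
  have hpre : IsPreconnected (g⁻¹ • K) :=
    image_smul (a := g⁻¹) (t := K) ▸ hK.image _ (continuous_const_smul g⁻¹).continuousOn
  have hsub : g⁻¹ • K ⊆ Cᶜ := by
    rintro _ ⟨z, hz, rfl⟩ hzC
    exact disjoint_left.1 hg (mem_smul_set_iff_inv_smul_mem.2 hzC) hz
  exact connectedComponentIn_eq <| hpre.subset_connectedComponentIn (smul_mem_smul_set hx) hsub
    (smul_mem_smul_set hy)

theorem accumulatesAt_of_tendsto_smul (hx : x ∈ C) (hxp : Tendsto (fun g : G => g • x) l (𝓝 p)) :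
    AccumulatesAt l C p := fun _ hV =>
  mem_of_superset (hxp hV) fun g hg => ⟨g • x, smul_mem_smul_set hx, hg⟩

theorem accumulatesAt_of_connectedComponentIn_ne [LocallyConnectedSpace X] [ContinuousConstSMul G X]
    (hxy : connectedComponentIn Cᶜ x ≠ connectedComponentIn Cᶜ y)
    (hx : Tendsto (fun g : G => g • x) l (𝓝 p)) (hy : Tendsto (fun g : G => g • y) l (𝓝 p)) :
    AccumulatesAt l C p := by
  intro V hV
  obtain ⟨K, hKV, hKo, hpK, hK⟩ :=
    locallyConnectedSpace_iff_subsets_isOpen_isConnected.1 ‹_› p V hV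
  have hKp : K ∈ 𝓝 p := hKo.mem_nhds hpK
  filter_upwards [hx hKp, hy hKp] with g hgx hgy
  by_contra hempty
  have hdisj : Disjoint (g • C) K :=
    (disjoint_iff_inter_eq_empty.2 (not_nonempty_iff_eq_empty.1 hempty)).mono_right hKV
  exact hxy (by
    simpa using connectedComponentIn_inv_smul_eq hK.isPreconnected hgx hgy hdisj)

theorem Crosses.symm (h : Crosses B C) : Crosses C B :=
  h.imp (fun h => inter_comm B C ▸ h) And.symm

theorem ShrinksTo.accumulatesAt_of_crosses [LocallyConnectedSpace X] [ContinuousConstSMul G X]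
    (f : ShrinksTo l B p) (h : Crosses B C) : AccumulatesAt l C p := by
  rcases h with ⟨x, hxB, hxC⟩ | ⟨-, -, x, hx, y, hy, hxy⟩
  · exact accumulatesAt_of_tendsto_smul hxC (f.tendsto_smul hxB)
  · exact accumulatesAt_of_connectedComponentIn_ne hxy (f.tendsto_smul hx) (f.tendsto_smul hy)

/-- If `C` separates `B`, it still separates two points of `B` other than `n`: near `n` there are
points of `B` in the same component of the complement of `C`. -/
theorem ConvergesTo.accumulatesAt_of_crosses [T1Space X] [LocallyConnectedSpace X]
    [ContinuousConstSMul G X] [l.NeBot] (f : ConvergesTo l B B' n p) (hB : 2 < B.encard)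
    (hC : IsClosed C) (hn : n ∉ C) (h : Crosses B C) : AccumulatesAt l C p := by
  rcases h with ⟨x, hxB, hxC⟩ | ⟨-, -, x, hx, y, hy, hxy⟩
  · exact accumulatesAt_of_tendsto_smul hxC (f.tendsto_smul hxB fun h => hn (h ▸ hxC))
  have hmove : ∀ z ∈ B, ∃ z' ∈ B, z' ≠ n ∧
      connectedComponentIn Cᶜ z' = connectedComponentIn Cᶜ z := by
    intro z hz
    by_cases hzn : z = n
    · obtain ⟨z', ⟨hz', hz'B⟩, hz'n⟩ := accPt_iff_nhds.1 (f.accPt_repeller hB) _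
        (hC.isOpen_compl.connectedComponentIn.mem_nhds (mem_connectedComponentIn hn))
      exact ⟨z', hz'B, hz'n, hzn ▸ (connectedComponentIn_eq hz').symm⟩
    · exact ⟨z, hz, hzn, rfl⟩
  obtain ⟨x', hx', hx'n, hxx'⟩ := hmove x hx
  obtain ⟨y', hy', hy'n, hyy'⟩ := hmove y hy
  exact accumulatesAt_of_connectedComponentIn_ne (hxx'.trans_ne (hxy.trans_eq hyy'.symm))
    (f.tendsto_smul hx' hx'n) (f.tendsto_smul hy' hy'n)

theorem ConvergesTo.inter_nonempty_of_crosses [T1Space X] [LocallyConnectedSpace X]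
    [ContinuousConstSMul G X] [l.NeBot] (f : ConvergesTo l B B' n p)
    (f' : ConvergesTo l C C' m q) (hB : 2 < B.encard) (hC : IsClosed C) (h : Crosses B C) :
    (B ∩ C).Nonempty := by
  by_cases hn : n ∈ C
  · exact ⟨n, f.repeller_mem, hn⟩
  · exact f.exists_mem_inter_of_attractor_mem f' <|
      f'.mem_of_accumulatesAt (f'.isClosed_image hC) (f.accumulatesAt_of_crosses hB hC hn h)

theorem CrossSeqAvoiding.mono (h : CrossSeqAvoiding 𝓐 C B D) (hD : D' ⊆ D) :
    CrossSeqAvoiding 𝓐 C B D' := by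
  obtain ⟨k, hk, c, h0, h1, hmem, hcross, hdisj⟩ := h
  exact ⟨k, hk, c, h0, h1, hmem, hcross, fun i hi hik =>
    subset_empty_iff.1 ((inter_subset_inter_right _ hD).trans_eq (hdisj i hi hik))⟩

/-- Induction along the crossing sequence, from its end `B` to its start `C`. -/
theorem CrossSeqAvoiding.exists_crosses (h : CrossSeqAvoiding 𝓐 C B D) {Q : Set X → Prop}
    (base : ∀ E ∈ 𝓐, Disjoint E D → Crosses E B → Q E)
    (step : ∀ E ∈ 𝓐, Disjoint E D → ∀ F ∈ 𝓐, Crosses E F → Q F → Q E) :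
    ∃ F ∈ 𝓐, Crosses C F ∧ Q F := by
  obtain ⟨k, hk, c, rfl, rfl, hmem, hcross, hdisj⟩ := h
  have hdisj' : ∀ i, 1 ≤ i → i ≤ k → Disjoint (c i) D := fun i hi hik =>
    disjoint_iff_inter_eq_empty.2 (hdisj i hi hik)
  refine ⟨c 1, hmem 1 (by omega), hcross 0 (by omega), ?_⟩
  refine Nat.decreasingInduction' (P := fun i => Q (c i)) (fun i hik hi hQ => ?_) hk
    (base (c k) (hmem k (by omega)) (hdisj' k hk le_rfl) (hcross k le_rfl))
  exact step (c i) (hmem i (by omega)) (hdisj' i hi hik.le) (c (i + 1)) (hmem _ (by omega))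
    (hcross i hik.le) hQ

end Crossing

section Existence

variable {𝒰 : Ultrafilter G} {𝓐 : Set (Set X)} {B B' : Set X} {p : X}

theorem NullFam.eventually_eq_or_tendsto_diam [PseudoMetricSpace X] (h𝓐 : NullFam 𝓐) {ι : Type*}
    {𝒱 : Ultrafilter ι} {f : ι → Set X} (hf : ∀ i, f i ∈ 𝓐) :
    (∃ D, ∀ᶠ i in 𝒱, f i = D) ∨ Tendsto (fun i => Metric.diam (f i)) 𝒱 (𝓝 0) := by
  refine or_iff_not_imp_left.2 fun hne => tendsto_order.2
    ⟨fun a ha => Eventually.of_forall fun i => ha.trans_le Metric.diam_nonneg, fun ε hε => ?_⟩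
  by_contra hlarge
  have hmem : ∀ᶠ i in 𝒱, ∃ D ∈ {A ∈ 𝓐 | ε / 2 < Metric.diam A}, f i = D := by
    filter_upwards [Ultrafilter.eventually_not.2 hlarge] with i hi
    exact ⟨f i, ⟨hf i, (half_lt_self hε).trans_le (not_lt.1 hi)⟩, rfl⟩
  obtain ⟨D, -, hD⟩ := (Ultrafilter.eventually_exists_mem_iff (h𝓐 _ (half_pos hε))).1 hmem
  exact hne ⟨D, hD⟩

theorem shrinksTo_of_tendsto_diam [PseudoMetricSpace X] [BoundedSpace X] {l : Filter G} {b : X}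
    (hb : b ∈ B) (hbp : Tendsto (fun g : G => g • b) l (𝓝 p))
    (hdiam : Tendsto (fun g : G => Metric.diam (g • B)) l (𝓝 0)) : ShrinksTo l B p := by
  refine tendsto_smallSets_iff.2 fun V hV => ?_
  obtain ⟨ε, hε, hεV⟩ := Metric.mem_nhds_iff.1 hV
  filter_upwards [hdiam.eventually_lt_const (half_pos hε),
    hbp.eventually (Metric.ball_mem_nhds p (half_pos hε))] with g hg hgb
  rintro _ ⟨x, hx, rfl⟩
  refine hεV (Metric.mem_ball.2 ?_)
  calc dist (g • x) p ≤ dist (g • x) (g • b) + dist (g • b) p := dist_triangle _ _ _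
    _ ≤ Metric.diam (g • B) + dist (g • b) p := by
      gcongr
      exact Metric.dist_le_diam_of_mem (Bornology.IsBounded.all _) (smul_mem_smul_set hx)
        (smul_mem_smul_set hb)
    _ < ε := by linarith [Metric.mem_ball.1 hgb]

/-- Translate by some `g₀` with `g₀ • B = B'`, so that `g₀⁻¹ * g` lies in the stabilizer of `B`. -/
theorem ConvGroupOn.exists_convergesTo [TopologicalSpace X] [ContinuousConstSMul G X]
    (hS : ConvGroupOn (stab G B) B) (hB : IsCompact B) (hle : ↑𝒰 ≤ (cofinite : Filter G))
    (hconst : ∀ᶠ g in (𝒰 : Filter G), g • B = B') :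
    ∃ n p, ConvergesTo (𝒰 : Filter G) B B' n p := by
  obtain ⟨g₀, hg₀⟩ := hconst.exists
  have hle' : ↑(𝒰.map (g₀⁻¹ * ·)) ≤ (cofinite : Filter G) :=
    (map_mono hle).trans (mul_right_injective g₀⁻¹).tendsto_cofinite
  have hstab : stab G B ∈ 𝒰.map (g₀⁻¹ * ·) := by
    refine hconst.mono fun g hg => ?_
    change (g₀⁻¹ * g) • B = B
    rw [mul_smul, hg, ← hg₀, inv_smul_smul]
  obtain ⟨n, hn, p, hp, hnp⟩ := hS.exists_tendstoAway hB hle' hstab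
  refine ⟨n, g₀ • p, hconst, hn, hg₀ ▸ smul_mem_smul_set hp, ?_⟩
  simpa using TendstoAway.of_map_mul_left (l := (𝒰 : Filter G)) hnp

theorem IsLocalConvPairing.exists_isAttractor [MetricSpace X] [CompactSpace X]
    [ContinuousConstSMul G X] (h : IsLocalConvPairing G 𝓐) (hle : ↑𝒰 ≤ (cofinite : Filter G))
    (hB : B ∈ 𝓐) : ∃ p, IsAttractor (𝒰 : Filter G) B p := by
  rcases h.null.eventually_eq_or_tendsto_diam fun g : G => h.invariant g B hB with ⟨B', hB'⟩ | hdiam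
  · obtain ⟨n, p, hnp⟩ := (h.stabConv B hB).exists_convergesTo (h.closed B hB).isCompact hle hB'
    exact ⟨p, Or.inr ⟨B', n, hnp⟩⟩
  · obtain ⟨b, hb⟩ := encard_pos.1 (zero_lt_two.trans (h.big B hB))
    obtain ⟨p, -, hp⟩ := isCompact_univ.ultrafilter_le_nhds (𝒰.map (· • b)) (by simp)
    exact ⟨p, Or.inl (shrinksTo_of_tendsto_diam hb hp hdiam)⟩

end Existence

section Uniqueness

variable [MetricSpace X] {l : Filter G} {𝓐 : Set (Set X)} {B B' C C' E P : Set X}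
  {m n p q : X}

theorem IsLocalConvPairing.crossSeqAvoiding (h : IsLocalConvPairing G 𝓐) (hC : C ∈ 𝓐) (hB : B ∈ 𝓐)
    (hPB : P ⊆ B) (hP : P.encard ≤ 2) (hne : (C ∩ B).Nonempty) (hsub : C ∩ B ⊆ P) :
    CrossSeqAvoiding 𝓐 C B P := by
  have eq_of_two_le : ∀ {D : Set X}, D ⊆ P → 1 < D.encard → D = P := fun {D} hDP hD =>
    (finite_of_encard_le_coe (k := 2) ((encard_le_encard hDP).trans hP)).eq_of_subset_of_encard_le
      hDP (hP.trans (by simpa [one_add_one_eq_two] using Order.add_one_le_of_lt hD))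
  obtain ⟨hsingle, hmany⟩ := h.connect C hC B hB ((encard_le_encard hsub).trans hP)
  by_cases hc : ∃ c, C ∩ B = {c}
  · obtain ⟨c, hc⟩ := hc
    have hcP : c ∈ P := hsub (hc ▸ mem_singleton c)
    by_cases hb : ∃ b ∈ P, b ≠ c
    · obtain ⟨b, hbP, hbc⟩ := hb
      exact eq_of_two_le (pair_subset hbP hcP) (one_lt_encard_iff.2 ⟨b, c, by simp [hbc]⟩) ▸
        hsingle c hc b (hPB hbP) hbc
    · obtain ⟨b, hbB, hbc, -⟩ := exists_mem_ne_ne (h.big B hB) c c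
      push Not at hb
      exact (hsingle c hc b hbB hbc).mono fun x hx => Or.inr (hb x hx)
  · have hnt : (C ∩ B).Nontrivial :=
      hne.exists_eq_singleton_or_nontrivial.resolve_left hc
    exact eq_of_two_le hsub (one_lt_encard_iff_nontrivial.2 hnt) ▸ hmany hc

variable [ContinuousConstSMul G X] [l.NeBot]

theorem ConvergesTo.shrinksTo_of_accumulatesAt (f : ConvergesTo l B B' n p)
    (h : IsLocalConvPairing G 𝓐) (hex : ∀ E ∈ 𝓐, ∃ q, IsAttractor l E q) (hE : E ∈ 𝓐)
    (hdisj : Disjoint E (exceptionalSet l n p)) (hacc : AccumulatesAt l E p) :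
    ShrinksTo l E p := by
  obtain ⟨q, fE | ⟨E', m, fE⟩⟩ := hex E hE
  · exact fE.eq_of_accumulatesAt hacc ▸ fE
  · have hEc := h.closed E hE
    have hp : p ∈ E' := fE.mem_of_accumulatesAt (fE.isClosed_image hEc) hacc
    exact absurd hdisj (f.not_disjoint_exceptionalSet fE hEc hp)

variable [LocallyConnectedSpace X]

theorem ConvergesTo.exists_crosses_shrinksTo (f : ConvergesTo l B B' n p)
    (h : IsLocalConvPairing G 𝓐) (hex : ∀ E ∈ 𝓐, ∃ q, IsAttractor l E q) (hC : C ∈ 𝓐) (hB : B ∈ 𝓐)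
    (hne : (C ∩ B).Nonempty) (hsub : C ∩ B ⊆ exceptionalSet l n p) :
    ∃ F ∈ 𝓐, Crosses C F ∧ ShrinksTo l F p := by
  refine (h.crossSeqAvoiding hC hB f.exceptionalSet_subset encard_exceptionalSet_le
    hne hsub).exists_crosses (fun E hE hdisj hEB => ?_) (fun E hE hdisj F _ hEF fF => ?_)
  · have hn : n ∉ E := disjoint_right.1 hdisj (mem_insert n _)
    exact f.shrinksTo_of_accumulatesAt h hex hE hdisj
      (f.accumulatesAt_of_crosses (h.big B hB) (h.closed E hE) hn hEB.symm)
  · exact f.shrinksTo_of_accumulatesAt h hex hE hdisj (fF.accumulatesAt_of_crosses hEF.symm)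

theorem ConvergesTo.eq_of_shrinksTo (f : ConvergesTo l B B' n p)
    (fC : ShrinksTo l C q) (h : IsLocalConvPairing G 𝓐)
    (hex : ∀ E ∈ 𝓐, ∃ q, IsAttractor l E q) (hB : B ∈ 𝓐) (hC : C ∈ 𝓐) (hBC : Crosses B C) :
    p = q := by
  by_cases hn : n ∈ C
  · by_cases hx : ∃ x ∈ C ∩ B, x ≠ n
    · obtain ⟨x, ⟨hxC, hxB⟩, hxn⟩ := hx
      exact tendsto_nhds_unique (f.tendsto_smul hxB hxn) (fC.tendsto_smul hxC)
    · push Not at hx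
      obtain ⟨F, -, hCF, fF⟩ := f.exists_crosses_shrinksTo h hex hC hB ⟨n, hn, f.repeller_mem⟩
        fun x hxCB => Or.inl (hx x hxCB)
      exact fC.eq_of_accumulatesAt (fF.accumulatesAt_of_crosses hCF.symm)
  · exact fC.eq_of_accumulatesAt
      (f.accumulatesAt_of_crosses (h.big B hB) (h.closed C hC) hn hBC)

theorem ConvergesTo.eq_of_convergesTo (f : ConvergesTo l B B' n p)
    (f' : ConvergesTo l C C' m q) (h : IsLocalConvPairing G 𝓐)
    (hex : ∀ E ∈ 𝓐, ∃ q, IsAttractor l E q) (hB : B ∈ 𝓐) (hC : C ∈ 𝓐) (hBC : Crosses B C) :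
    p = q := by
  by_cases hcard : (B ∩ C).encard ≤ 2
  · have hne := f.inter_nonempty_of_crosses f' (h.big B hB) (h.closed C hC) hBC
    have hsub := f.inter_subset_exceptionalSet f' (finite_of_encard_le_coe (k := 2) hcard)
    rw [inter_comm] at hne hsub
    obtain ⟨F, hF, hCF, fF⟩ := f.exists_crosses_shrinksTo h hex hC hB hne hsub
    exact (f'.eq_of_shrinksTo fF h hex hC hF hCF).symm
  · obtain ⟨x, ⟨hxB, hxC⟩, hxn, hxm⟩ := exists_mem_ne_ne (not_le.1 hcard) n m
    exact tendsto_nhds_unique (f.tendsto_smul hxB hxn) (f'.tendsto_smul hxC hxm)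

theorem IsAttractor.eq_of_crosses (f : IsAttractor l B p)
    (f' : IsAttractor l C q) (h : IsLocalConvPairing G 𝓐)
    (hex : ∀ E ∈ 𝓐, ∃ q, IsAttractor l E q) (hB : B ∈ 𝓐) (hC : C ∈ 𝓐) (hBC : Crosses B C) :
    p = q := by
  rcases f with f | ⟨B', n, f⟩ <;> rcases f' with f' | ⟨C', m, f'⟩
  · exact f'.eq_of_accumulatesAt (f.accumulatesAt_of_crosses hBC)
  · exact (f'.eq_of_shrinksTo f h hex hC hB hBC.symm).symm
  · exact f.eq_of_shrinksTo f' h hex hB hC hBC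
  · exact f.eq_of_convergesTo f' h hex hB hC hBC

theorem IsLocalConvPairing.exists_forall_isAttractor (h : IsLocalConvPairing G 𝓐)
    (hne : 𝓐.Nonempty) (hex : ∀ E ∈ 𝓐, ∃ q, IsAttractor l E q) :
    ∃ p, ∀ B ∈ 𝓐, IsAttractor l B p := by
  have transfer : ∀ E ∈ 𝓐, ∀ F ∈ 𝓐, Crosses E F → ∀ {q}, IsAttractor l F q →
      IsAttractor l E q := by
    intro E hE F hF hEF q hq
    obtain ⟨r, hr⟩ := hex E hE
    exact hr.eq_of_crosses hq h hex hE hF hEF ▸ hr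
  obtain ⟨A, hA⟩ := hne
  obtain ⟨p, hp⟩ := hex A hA
  refine ⟨p, fun B hB => ?_⟩
  by_cases hBA : (B ∩ A).Nonempty
  · exact transfer B hB A hA (Or.inl hBA) hp
  · rw [not_nonempty_iff_eq_empty] at hBA
    have hseq : CrossSeqAvoiding 𝓐 B A ∅ := hBA ▸ (h.connect B hB A hA (by simp [hBA])).2
      (by simp [hBA, (singleton_ne_empty _).symm])
    obtain ⟨F, hF, hBF, hFp⟩ := hseq.exists_crosses (Q := fun E => IsAttractor l E p)
      (fun E hE _ hEA => transfer E hE A hA hEA hp)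
      (fun E hE _ F hF hEF hFp => transfer E hE F hF hEF hFp)
    exact transfer B hB F hF hBF hFp

end Uniqueness

section WholeSpace

variable [TopologicalSpace X] [LocallyConnectedSpace X] {l : Filter G} {n p x y z : X}

theorem exists_isOpen_isPreconnected_compl_mem_nhds [T2Space X]
    (hn : IsPreconnected ({n}ᶜ : Set X)) (hx : x ≠ n) (hz : z ≠ n) :
    ∃ K, IsOpen K ∧ IsPreconnected K ∧ Kᶜ ∈ 𝓝 n ∧ x ∈ K ∧ z ∈ K := by
  refine hn.induction₂
    (fun x z => ∃ K, IsOpen K ∧ IsPreconnected K ∧ Kᶜ ∈ 𝓝 n ∧ x ∈ K ∧ z ∈ K) ?_ ?_ ?_ hx hz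
  · intro a ha
    obtain ⟨V, hV, V', hV', hd⟩ := Filter.disjoint_iff.1 (disjoint_nhds_nhds.2 ha)
    obtain ⟨K, hKV, hKo, haK, hK⟩ :=
      locallyConnectedSpace_iff_subsets_isOpen_isConnected.1 ‹_› a V hV
    filter_upwards [mem_nhdsWithin_of_mem_nhds (hKo.mem_nhds haK)] with b hb
    exact ⟨K, hKo, hK.isPreconnected, mem_of_superset hV' (hd.mono_left hKV).subset_compl_left,
      haK, hb⟩
  · rintro a b c - - - ⟨K, hKo, hK, hnK, haK, hbK⟩ ⟨L, hLo, hL, hnL, hbL, hcL⟩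
    refine ⟨K ∪ L, hKo.union hLo, hK.union b hbK hbL hL, ?_, Or.inl haK, Or.inr hcL⟩
    rw [compl_union]
    exact inter_mem hnK hnL
  · rintro a b - - ⟨K, hKo, hK, hnK, haK, hbK⟩
    exact ⟨K, hKo, hK, hnK, hbK, haK⟩

/-- The image of a connected set joining `x` to `z` away from `n` misses `E`, so it cannot join the
components of `y` and `p`. -/
theorem eventually_smul_ne_of_sepPts [T2Space X] [ContinuousConstSMul G X] {E : Set X}
    (hn : IsPreconnected ({n}ᶜ : Set X)) (hE : IsClosed E) (hEn : ShrinksTo l⁻¹ E n)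
    (hsep : SepPts E y p) (hx : x ≠ n) (hz : z ≠ n)
    (hzp : Tendsto (fun g : G => g • z) l (𝓝 p)) :
    ∀ᶠ q : G × X × X in l ×ˢ 𝓝 (x, y), q.1 • q.2.1 ≠ q.2.2 := by
  obtain ⟨hyE, hpE, hyp⟩ := hsep
  obtain ⟨K, hKo, hK, hnK, hxK, hzK⟩ := exists_isOpen_isPreconnected_compl_mem_nhds hn hx hz
  have hcomp : ∀ w ∈ Eᶜ, connectedComponentIn Eᶜ w ∈ 𝓝 w := fun w hw =>
    hE.isOpen_compl.connectedComponentIn.mem_nhds (mem_connectedComponentIn hw)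
  have hg : ∀ᶠ g in l, g⁻¹ • E ⊆ Kᶜ ∧ g • z ∈ connectedComponentIn Eᶜ p :=
    (eventually_inv.1 (hEn.eventually_subset hnK)).and (hzp (hcomp p hpE))
  filter_upwards [hg.prod_mk (prod_mem_nhds (hKo.mem_nhds hxK) (hcomp y hyE))]
  rintro ⟨g, x', y'⟩ ⟨⟨hgE, hgz⟩, hx', hy'⟩ (rfl : g • x' = y')
  have hjoin : connectedComponentIn Eᶜ (g • x') = connectedComponentIn Eᶜ (g • z) := by
    simpa using connectedComponentIn_inv_smul_eq hK hx' hzK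
      (disjoint_left.2 fun w hw => hgE hw : Disjoint (g⁻¹ • E) K)
  exact hyp <| (connectedComponentIn_eq hy').trans <|
    hjoin.trans (connectedComponentIn_eq hgz).symm

theorem tendstoAway_univ_of_forall_sepPts [T2Space X] [CompactSpace X] [ContinuousConstSMul G X]
    (hn : IsPreconnected ({n}ᶜ : Set X)) (hz : z ≠ n)
    (hzp : Tendsto (fun g : G => g • z) l (𝓝 p))
    (hsep : ∀ y ≠ p, ∃ E, IsClosed E ∧ ShrinksTo l⁻¹ E n ∧ SepPts E y p) :
    TendstoAway l univ n p := by
  intro W hW U hU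
  have hcompact : IsCompact ((interior W)ᶜ ×ˢ (interior U)ᶜ) :=
    isOpen_interior.isClosed_compl.isCompact.prod isOpen_interior.isClosed_compl.isCompact
  have hlocal : ∀ w ∈ (interior W)ᶜ ×ˢ (interior U)ᶜ,
      {q : G × X × X | q.1 • q.2.1 ≠ q.2.2} ∈ l ×ˢ 𝓝 w := by
    rintro ⟨x, y⟩ ⟨hx, hy⟩
    obtain ⟨E, hE, hEn, hEyp⟩ := hsep y fun h => hy (h ▸ mem_interior_iff_mem_nhds.2 hU)
    exact eventually_smul_ne_of_sepPts hn hE hEn hEyp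
      (fun h => hx (h ▸ mem_interior_iff_mem_nhds.2 hW)) hz hzp
  have hprod : ∀ᶠ q : G × X × X in l ×ˢ 𝓝ˢ ((interior W)ᶜ ×ˢ (interior U)ᶜ),
    q.1 • q.2.1 ≠ q.2.2 := hcompact.mem_prod_nhdsSet_of_forall hlocal
  filter_upwards [hprod.curry] with g hg x _ hxW
  by_contra hgx
  exact hg.self_of_nhdsSet (x, g • x)
    ⟨fun h => hxW (interior_subset h), fun h => hgx (interior_subset h)⟩ rfl

end WholeSpace

section Main

variable [MetricSpace X] {𝓐 : Set (Set X)}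

theorem IsLocalConvPairing.shrinksTo_inv_of_notMem (h : IsLocalConvPairing G 𝓐) {l : Filter G}
    [l.NeBot] {n p : X} (hp : ∀ B ∈ 𝓐, IsAttractor l B p) {B : Set X} (hB : B ∈ 𝓐)
    (hn : IsAttractor l⁻¹ B n) (hpB : p ∉ B) : ShrinksTo l⁻¹ B n := by
  refine hn.resolve_right ?_
  rintro ⟨B', q, f⟩
  obtain ⟨g, hg⟩ := f.eventually_smul_eq.exists
  have hB' : B' ∈ 𝓐 := hg ▸ h.invariant g B hB
  have f' : IsAttractor l B' q := Or.inr ⟨B, n, by simpa only [inv_inv] using f.inv⟩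
  exact hpB (f'.unique (hp B' hB') (h.big B' hB') ▸ f.repeller_mem)

theorem stabilizer_conv_on_space_general [CompactSpace X] [LocallyConnectedSpace X]
    [ContinuousConstSMul G X] (hcut : ∀ x : X, IsPreconnected ({x}ᶜ : Set X))
    (h : IsLocalConvPairing G 𝓐) (hne : 𝓐.Nonempty) :
    ConvGroupOn (univ : Set G) (univ : Set X) := by
  refine convGroupOn_of_forall_ultrafilter fun 𝒰 hle _ => ?_
  have hle_inv : ↑(𝒰.map (·⁻¹)) ≤ (cofinite : Filter G) :=
    (map_mono hle).trans inv_injective.tendsto_cofinite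
  obtain ⟨p, hp⟩ := h.exists_forall_isAttractor hne fun _ => h.exists_isAttractor hle
  obtain ⟨n, hn⟩ := h.exists_forall_isAttractor hne fun _ => h.exists_isAttractor hle_inv
  obtain ⟨A, hA⟩ := hne
  obtain ⟨m, hm⟩ := (hp A hA).exists_forall_tendsto_smul
  obtain ⟨z, hzA, hzn, hzm⟩ := exists_mem_ne_ne (h.big A hA) n m
  refine ⟨n, mem_univ n, p, mem_univ p,
    tendstoAway_univ_of_forall_sepPts (hcut n) hzn (hm z hzA hzm) fun y hyp => ?_⟩
  obtain ⟨𝓑, h𝓑, hfin, hsep⟩ := h.fine y p hyp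
  have hclosed : IsClosed (⋃₀ 𝓑) :=
    sUnion_eq_biUnion ▸ hfin.isClosed_biUnion fun B hB => h.closed B (h𝓑 hB)
  refine ⟨⋃₀ 𝓑, hclosed, .sUnion hfin fun B hB => ?_, hsep⟩
  exact h.shrinksTo_inv_of_notMem hp (h𝓑 hB) (hn B (h𝓑 hB)) fun hpB =>
    hsep.2.1 (mem_sUnion_of_mem hpB hB)

end Main

end Action

/-- If `(G, 𝓐)` is a local convergence pairing on `X`, then each stabilizer `st(A)`
acts as a convergence group on all of `X`. -/
theorem stabilizer_conv_on_space {G X : Type*} [Group G] [MulAction G X]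
    [MetricSpace X] [CompactSpace X] [ConnectedSpace X] [LocallyConnectedSpace X]
    [ContinuousConstSMul G X]
    (hcut : ∀ x : X, IsPreconnected ({x}ᶜ : Set X))
    (𝓐 : Set (Set X)) (h : IsLocalConvPairing G 𝓐) :
    ∀ A ∈ 𝓐, ConvGroupOn (stab G A) (Set.univ : Set X) :=
  fun A hA => (stabilizer_conv_on_space_general hcut h ⟨A, hA⟩).mono (subset_univ _)
end

section
/- Let Z be a Peano continuum which admits no essential map to the circle, and let A, B be disjoint closed subsets of Z. Let c, d ∈ Z \ (A ∪ B). If c and d are not separated by A and not separated by B (i.e., c and d lie in the same component of Z \ A and in the same component of Z \ B), then c and d are not separated by A ∪ B. -/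
/-!
Let `U` be the component of `c` in the complement of `A ∪ B`; by local connectedness its frontier
lies in `A ∪ B`. Take a Urysohn function `φ` with `φ = 0` on `A` and `φ = 1` on `B`. The functions
`2πφ · 1_U` and `2π(φ - 1) · 1_U` are continuous off `B` and off `A` respectively, and they differ
by `2π · 1_U`, so they are local logarithms of one map `f : Z → S¹`. As `f` is nullhomotopic, it has
a global logarithm `θ`, which differs from each local one by a constant on connected sets. Hence
`1_U` takes the same value at any two points that are joined by a connected set off `A` and by
another one off `B`.
-/

open Set Filter Topology Pointwise

lemma continuousOn_indicator {X Y : Type*} [TopologicalSpace X] [TopologicalSpace Y] [Zero Y]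
    {s t : Set X} {f : X → Y} (hs : ∀ x ∈ t ∩ frontier s, f x = 0)
    (hf : ContinuousOn f (t ∩ closure s)) : ContinuousOn (s.indicator f) t := by
  classical exact hf.piecewise hs continuousOn_const

lemma frontier_connectedComponentIn_subset_compl {X : Type*} [TopologicalSpace X]
    [LocallyConnectedSpace X] {E : Set X} (hE : IsOpen E) (x : X) :
    frontier (connectedComponentIn E x) ⊆ Eᶜ := by
  intro y hy hyE
  obtain ⟨z, hzy, hzx⟩ := mem_closure_iff.1 (frontier_subset_closure hy) _
    hE.connectedComponentIn (mem_connectedComponentIn hyE)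
  have same_component : connectedComponentIn E x = connectedComponentIn E y :=
    (connectedComponentIn_eq hzx).trans (connectedComponentIn_eq hzy).symm
  rw [hE.connectedComponentIn.frontier_eq] at hy
  exact hy.2 (same_component ▸ mem_connectedComponentIn hyE)

lemma exists_lift_of_nullhomotopic {Z E X : Type*} [TopologicalSpace Z] [TopologicalSpace E]
    [TopologicalSpace X] {p : E → X} (hp : IsCoveringMap p) (hsurj : Function.Surjective p)
    {f : C(Z, X)} (hf : f.Nullhomotopic) : ∃ F : C(Z, E), ∀ z, p (F z) = f z := by
  obtain ⟨x, ⟨H⟩⟩ := hf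
  obtain ⟨e, rfl⟩ := hsurj x
  let K := H.symm
  let L := hp.liftHomotopy K.toContinuousMap (.const Z e) K.apply_zero
  have lifts : p ∘ L = K.toContinuousMap := hp.liftHomotopy_lifts _ _ K.apply_zero
  exact ⟨L.comp ((ContinuousMap.const Z 1).prodMk (ContinuousMap.id Z)),
    fun z => (congrFun lifts (1, z)).trans (K.apply_one z)⟩

section Logarithm

variable {Z : Type*} [TopologicalSpace Z]

lemma sub_eq_sub_of_exp_eq_exp {S : Set Z} (hS : IsPreconnected S) {g h : Z → ℝ}
    (hg : ContinuousOn g S) (hh : ContinuousOn h S)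
    (hexp : ∀ z ∈ S, Circle.exp (g z) = Circle.exp (h z)) {x y : Z} (hx : x ∈ S) (hy : y ∈ S) :
    g x - g y = h x - h y := by
  have mapsTo : MapsTo (g - h) S (AddSubgroup.zmultiples (2 * Real.pi)) := by
    intro z hz
    obtain ⟨m, hm⟩ := Circle.exp_eq_exp.1 (hexp z hz)
    exact ⟨m, by simp [hm]⟩
  have constant : (g - h) x = (g - h) y :=
    hS.constant_of_mapsTo (SetLike.isDiscrete_iff_discreteTopology.2 inferInstance) (hg.sub hh)
      mapsTo hx hy
  simp only [Pi.sub_apply] at constant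
  linarith

lemma sub_eq_sub_of_exp_eq_exp_of_nullhomotopic (hnull : ∀ f : C(Z, Circle), f.Nullhomotopic)
    {O₀ O₁ : Set Z} (hO₀ : IsOpen O₀) (hO₁ : IsOpen O₁) (hcover : O₀ ∪ O₁ = univ) {g₀ g₁ : Z → ℝ}
    (hg₀ : ContinuousOn g₀ O₀) (hg₁ : ContinuousOn g₁ O₁)
    (hexp : ∀ z, Circle.exp (g₀ z) = Circle.exp (g₁ z)) {x y : Z}
    (hy₀ : y ∈ connectedComponentIn O₀ x) (hy₁ : y ∈ connectedComponentIn O₁ x) :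
    g₀ x - g₀ y = g₁ x - g₁ y := by
  have continuous_exp : Continuous fun z => Circle.exp (g₀ z) := by
    rw [← continuousOn_univ, ← hcover]
    exact (Circle.exp.continuous.comp_continuousOn hg₀).union_of_isOpen
      ((Circle.exp.continuous.comp_continuousOn hg₁).congr fun z _ => hexp z) hO₀ hO₁
  obtain ⟨θ, hθ⟩ := exists_lift_of_nullhomotopic Circle.isCoveringMap_exp Circle.exp_surjective
    (hnull ⟨_, continuous_exp⟩)
  have increment_eq {O : Set Z} {g : Z → ℝ} (hg : ContinuousOn g O)
      (hθg : ∀ z, Circle.exp (θ z) = Circle.exp (g z)) (hy : y ∈ connectedComponentIn O x) :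
      θ x - θ y = g x - g y :=
    sub_eq_sub_of_exp_eq_exp isPreconnected_connectedComponentIn θ.continuous.continuousOn
      (hg.mono (connectedComponentIn_subset O x)) (fun z _ => hθg z)
      (mem_connectedComponentIn (connectedComponentIn_nonempty_iff.1 ⟨y, hy⟩)) hy
  exact (increment_eq hg₀ hθ hy₀).symm.trans
    (increment_eq hg₁ (fun z => (hθ z).trans (hexp z)) hy₁)

lemma mem_iff_mem_of_frontier_subset_union [NormalSpace Z]
    (hnull : ∀ f : C(Z, Circle), f.Nullhomotopic) {A B U : Set Z} (hA : IsClosed A)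
    (hB : IsClosed B) (hAB : Disjoint A B) (hU : frontier U ⊆ A ∪ B) {c d : Z}
    (hdA : d ∈ connectedComponentIn Aᶜ c) (hdB : d ∈ connectedComponentIn Bᶜ c) :
    c ∈ U ↔ d ∈ U := by
  classical
  obtain ⟨φ, hφA, hφB, -⟩ := exists_continuous_zero_one_of_isClosed hA hB hAB
  let g₀ : Z → ℝ := U.indicator fun z => 2 * Real.pi * φ z
  let g₁ : Z → ℝ := U.indicator fun z => 2 * Real.pi * (φ z - 1)
  have hg₀ : ContinuousOn g₀ Bᶜ := continuousOn_indicator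
    (fun z ⟨hzB, hzU⟩ => by simp [hφA ((hU hzU).resolve_right hzB)]) (by fun_prop)
  have hg₁ : ContinuousOn g₁ Aᶜ := continuousOn_indicator
    (fun z ⟨hzA, hzU⟩ => by simp [hφB ((hU hzU).resolve_left hzA)]) (by fun_prop)
  have g₀_eq (z : Z) : g₀ z = g₁ z + if z ∈ U then 2 * Real.pi else 0 := by
    simp only [g₀, g₁, indicator_apply]
    split_ifs <;> ring
  have hexp (z : Z) : Circle.exp (g₀ z) = Circle.exp (g₁ z) := by
    rw [g₀_eq]
    split_ifs <;> simp
  have increment_eq : g₀ c - g₀ d = g₁ c - g₁ d :=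
    sub_eq_sub_of_exp_eq_exp_of_nullhomotopic hnull hB.isOpen_compl hA.isOpen_compl
      (by rw [← compl_inter, hAB.symm.inter_eq, compl_empty]) hg₀ hg₁ hexp hdB hdA
  have jump_eq : (if c ∈ U then 2 * Real.pi else 0) = if d ∈ U then 2 * Real.pi else 0 := by
    linarith [g₀_eq c, g₀_eq d]
  by_cases hcU : c ∈ U <;> by_cases hdU : d ∈ U <;>
    simp [hcU, hdU, Real.pi_ne_zero] at jump_eq ⊢

end Logarithm

theorem janiszewski_general {Z : Type*} [TopologicalSpace Z] [NormalSpace Z]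
    [LocallyConnectedSpace Z] (hcirc : ∀ f : C(Z, Circle), f.Nullhomotopic) {A B : Set Z}
    (hA : IsClosed A) (hB : IsClosed B) (hAB : Disjoint A B) {c d : Z}
    (hdA : d ∈ connectedComponentIn Aᶜ c) (hdB : d ∈ connectedComponentIn Bᶜ c) :
    d ∈ connectedComponentIn (A ∪ B)ᶜ c := by
  have hcA : c ∈ Aᶜ := connectedComponentIn_nonempty_iff.1 ⟨d, hdA⟩
  have hcB : c ∈ Bᶜ := connectedComponentIn_nonempty_iff.1 ⟨d, hdB⟩
  have frontier_subset : frontier (connectedComponentIn (A ∪ B)ᶜ c) ⊆ A ∪ B := by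
    simpa only [compl_compl] using
      frontier_connectedComponentIn_subset_compl (hA.union hB).isOpen_compl c
  refine (mem_iff_mem_of_frontier_subset_union hcirc hA hB hAB frontier_subset hdA hdB).1 ?_
  exact mem_connectedComponentIn (compl_union A B ▸ ⟨hcA, hcB⟩)

/-- Janiszewski-type lemma: in a Peano continuum admitting no essential map to the
circle, if disjoint closed sets `A` and `B` each fail to separate `c` from `d`, then
`A ∪ B` does not separate `c` from `d`. -/
theorem janiszewski {Z : Type*} [MetricSpace Z] [CompactSpace Z] [ConnectedSpace Z]
    [LocallyConnectedSpace Z]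
    (hcirc : ∀ f : C(Z, Circle), f.Nullhomotopic)
    (A B : Set Z) (hA : IsClosed A) (hB : IsClosed B) (hAB : Disjoint A B)
    (c d : Z) (hc : c ∉ A ∪ B) (hd : d ∉ A ∪ B)
    (h1 : connectedComponentIn Aᶜ c = connectedComponentIn Aᶜ d)
    (h2 : connectedComponentIn Bᶜ c = connectedComponentIn Bᶜ d) :
    connectedComponentIn (A ∪ B)ᶜ c = connectedComponentIn (A ∪ B)ᶜ d :=
  connectedComponentIn_eq <| janiszewski_general hcirc hA hB hAB
    (h1 ▸ mem_connectedComponentIn fun hdA => hd (.inl hdA))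
    (h2 ▸ mem_connectedComponentIn fun hdB => hd (.inr hdB))
end

section
/- Let M be a compact connected locally connected Hausdorff space, let c, d ∈ M, and let (A_i) be a nested sequence of closed subsets of M (A_{i+1} ⊆ A_i for all i) with c, d ∉ A_1, such that each A_i separates c from d. Then the intersection ∩_i A_i separates c from d. -/
/-!
Lying in a common component of some `U i` is an equivalence relation on `⋃ i, U i` when the family
`U` is directed, and its classes are open when the `U i` are open in a locally connected space. A
connected subset of `⋃ i, U i` therefore lies in a single class, so the components of the union
are the unions of the components of the `U i`. With `U i = (A i)ᶜ`, two points in one component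
of `(⋂ i, A i)ᶜ` already lie in one component of some `(A i)ᶜ`.
-/

open Set Filter Topology Pointwise

section

variable {X : Type*} {ι : Sort*} [TopologicalSpace X] {E F : Set X} {x y : X}

theorem mem_connectedComponentIn_symm (hy : y ∈ connectedComponentIn F x) :
    x ∈ connectedComponentIn F y := by
  rw [← connectedComponentIn_eq hy]
  exact mem_connectedComponentIn (connectedComponentIn_nonempty_iff.1 ⟨y, hy⟩)

theorem connectedComponentIn_iUnion_of_directed [LocallyConnectedSpace X] {U : ι → Set X}
    (hopen : ∀ i, IsOpen (U i)) (hdir : Directed (· ⊆ ·) U) (x : X) :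
    connectedComponentIn (⋃ i, U i) x = ⋃ i, connectedComponentIn (U i) x := by
  refine Subset.antisymm (fun y hy ↦ ?_)
    (iUnion_subset fun i ↦ connectedComponentIn_mono x (subset_iUnion U i))
  have hx : x ∈ ⋃ i, U i := connectedComponentIn_nonempty_iff.1 ⟨y, hy⟩
  refine mem_iUnion.2 <| isPreconnected_connectedComponentIn.induction₂
    (fun a b ↦ ∃ i, b ∈ connectedComponentIn (U i) a) ?nhds ?trans ?symm
    (mem_connectedComponentIn hx) hy
  case nhds =>
    intro a ha
    obtain ⟨i, hai⟩ := mem_iUnion.1 (connectedComponentIn_subset _ _ ha)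
    have hnhds : connectedComponentIn (U i) a ∈ 𝓝 a :=
      connectedComponentIn_mem_nhds ((hopen i).mem_nhds hai)
    filter_upwards [mem_nhdsWithin_of_mem_nhds hnhds] with b hb using ⟨i, hb⟩
  case trans =>
    rintro a b c - - - ⟨i, hb⟩ ⟨j, hc⟩
    obtain ⟨k, hik, hjk⟩ := hdir i j
    have hb' : b ∈ connectedComponentIn (U k) a := connectedComponentIn_mono a hik hb
    have hc' : c ∈ connectedComponentIn (U k) b := connectedComponentIn_mono b hjk hc
    exact ⟨k, connectedComponentIn_eq hb' ▸ hc'⟩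
  case symm =>
    rintro a b - - ⟨i, hb⟩
    exact ⟨i, mem_connectedComponentIn_symm hb⟩

theorem sepPts_iff_notMem_connectedComponentIn :
    SepPts E x y ↔ x ∉ E ∧ y ∉ E ∧ y ∉ connectedComponentIn Eᶜ x :=
  and_congr_right fun _ ↦ and_congr_right fun hy ↦ not_congr
    ⟨fun h ↦ h ▸ mem_connectedComponentIn hy, connectedComponentIn_eq⟩

theorem nested_intersection_separates_general [LocallyConnectedSpace X] [Nonempty ι]
    {A : ι → Set X} (hclosed : ∀ i, IsClosed (A i)) (hdir : Directed (· ⊇ ·) A)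
    (hsep : ∀ i, SepPts (A i) x y) : SepPts (⋂ i, A i) x y := by
  simp only [sepPts_iff_notMem_connectedComponentIn] at hsep ⊢
  obtain ⟨i⟩ := ‹Nonempty ι›
  refine ⟨fun hx ↦ (hsep i).1 (mem_iInter.1 hx i), fun hy ↦ (hsep i).2.1 (mem_iInter.1 hy i), ?_⟩
  have hdir_compl : Directed (· ⊆ ·) fun i ↦ (A i)ᶜ :=
    hdir.mono_comp _ fun _ _ ↦ compl_subset_compl.2
  rw [compl_iInter,
    connectedComponentIn_iUnion_of_directed (fun i ↦ (hclosed i).isOpen_compl) hdir_compl,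
    mem_iUnion, not_exists]
  exact fun i ↦ (hsep i).2.2

end

/-- If each member of a nested sequence of closed sets separates `c` from `d` in a
compact connected locally connected Hausdorff space, then so does the intersection. -/
theorem nested_intersection_separates {M : Type*} [TopologicalSpace M] [CompactSpace M]
    [ConnectedSpace M] [LocallyConnectedSpace M] [T2Space M]
    (c d : M) (A : ℕ → Set M) (hclosed : ∀ i, IsClosed (A i))
    (hnested : ∀ i, A (i + 1) ⊆ A i) (hc : c ∉ A 0) (hd : d ∉ A 0)
    (hsep : ∀ i, SepPts (A i) c d) :
    SepPts (⋂ i, A i) c d :=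
  nested_intersection_separates_general hclosed
    (antitone_nat_of_succ_le hnested).directed_ge hsep
end

section
/- Let X be a Peano continuum without cut points which admits no essential map to the circle, and let 𝓐 be a collection of connected closed subsets of X, each containing at least two points, such that 𝓐 is null and fine. Then 𝓐 is cross-connected: for any A, B ∈ 𝓐 there is a crossing sequence in 𝓐 from A to B. -/
open Set Filter Topology Pointwise

/-!
A connected set disjoint from `A` is not separated by `A`, so two members of `𝓐` cross exactly when
they meet. Hence if the crossing class `𝓒` of a member is not all of `𝓐`, then `⋃₀ 𝓒` is a connected
set disjoint from every member of `𝓐 \ 𝓒`.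

Since circle maps have logarithms, a Janiszewski-type theorem holds: if the union of two disjoint
closed sets separates `x` from `y`, so does one of them. With fineness it follows that any two
points are separated by a finite union of members of `𝓒` or by a finite union of members of `𝓐 \ 𝓒`.

Fix `B ∈ 𝓐 \ 𝓒`, and for finite `F ⊆ 𝓒` let `W F` be the component of the complement of `⋃₀ F` that
contains `B`. Both kinds of separation confine the frontiers of the sets `W F`: for large `F` they
lie in the closure of any given `W F₀`, and always in the closure of `⋃₀ 𝓒`. So they accumulate at
one point `p` at most. But `p` is not a cut point, so a continuum missing `p` joins a point of some
`A ∈ 𝓒` to a point of `B`; it meets the frontier of `W F` as soon as `A ∈ F`, and by compactness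
these frontiers accumulate on it, away from `p`.
-/

section Frontiers

variable {X : Type*} [TopologicalSpace X]

lemma inter_frontier_nonempty {M W : Set X} (hM : IsPreconnected M) (hMW : (M ∩ W).Nonempty)
    (hMWc : (M ∩ Wᶜ).Nonempty) : (M ∩ frontier W).Nonempty := by
  rw [← not_disjoint_iff_nonempty_inter, ← subset_compl_iff_disjoint_right,
    compl_frontier_eq_union_interior]
  intro hcover
  obtain ⟨a, haM, haW⟩ := hMW
  obtain ⟨b, hbM, hbW⟩ := hMWc
  have ha : a ∈ interior W :=
    (hcover haM).resolve_right fun h => interior_subset h haW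
  have hMint : M ⊆ interior W :=
    hM.subset_left_of_subset_union isOpen_interior isOpen_interior
      (disjoint_compl_right.mono interior_subset interior_subset) hcover ⟨a, haM, ha⟩
  exact hbW (interior_subset (hMint hbM))

lemma frontier_connectedComponentIn_compl_subset [LocallyConnectedSpace X] {E : Set X}
    (hE : IsClosed E) (b : X) : frontier (connectedComponentIn Eᶜ b) ⊆ E := by
  intro z hz
  by_contra hzE
  rw [hE.isOpen_compl.connectedComponentIn.frontier_eq] at hz
  obtain ⟨w, hwz, hwb⟩ := mem_closure_iff.1 hz.1 _ hE.isOpen_compl.connectedComponentIn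
    (mem_connectedComponentIn hzE)
  apply hz.2
  rw [connectedComponentIn_eq hwb, ← connectedComponentIn_eq hwz]
  exact mem_connectedComponentIn hzE

lemma exists_isCompact_isPreconnected_of_isOpen [R1Space X] [WeaklyLocallyCompactSpace X]
    [LocallyConnectedSpace X] {S : Set X} (hS : IsPreconnected S) (hSo : IsOpen S) {a b : X}
    (ha : a ∈ S) (hb : b ∈ S) :
    ∃ M ⊆ S, IsCompact M ∧ IsPreconnected M ∧ a ∈ M ∧ b ∈ M := by
  refine hS.induction₂ (fun a b => ∃ M ⊆ S, IsCompact M ∧ IsPreconnected M ∧ a ∈ M ∧ b ∈ M)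
    ?_ ?_ ?_ ha hb
  · intro x hx
    obtain ⟨K, ⟨hKx, hKcomp, hKclosed⟩, hKS⟩ :=
      (isCompact_isClosed_basis_nhds x).mem_iff.1 (hSo.mem_nhds hx)
    obtain ⟨V, hVK, hVo, hxV, hVconn⟩ :=
      locallyConnectedSpace_iff_subsets_isOpen_isConnected.1 ‹_› x K hKx
    refine mem_nhdsWithin_of_mem_nhds (mem_of_superset (hVo.mem_nhds hxV) fun y hy => ?_)
    have hVK' : closure V ⊆ K := closure_minimal hVK hKclosed
    exact ⟨closure V, hVK'.trans hKS, hKcomp.of_isClosed_subset isClosed_closure hVK',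
      hVconn.isPreconnected.closure, subset_closure hxV, subset_closure hy⟩
  · rintro x y z - - - ⟨M, hMS, hM, hMconn, hxM, hyM⟩ ⟨N, hNS, hN, hNconn, hyN, hzN⟩
    exact ⟨M ∪ N, union_subset hMS hNS, hM.union hN, hMconn.union y hyM hyN hNconn,
      .inl hxM, .inr hzN⟩
  · rintro x y - - ⟨M, hMS, hM, hMconn, hxM, hyM⟩
    exact ⟨M, hMS, hM, hMconn, hyM, hxM⟩

end Frontiers

section CircleMaps

variable {X : Type*} [TopologicalSpace X]

lemma exists_circleExp_eq_of_nullhomotopic {f : C(X, Circle)} (hf : f.Nullhomotopic) :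
    ∃ θ : C(X, ℝ), ∀ x, Circle.exp (θ x) = f x := by
  obtain ⟨c, ⟨H⟩⟩ := hf
  obtain ⟨t, rfl⟩ := Circle.exp_surjective c
  have hzero : ∀ x, H.symm.toContinuousMap (0, x) = Circle.exp (ContinuousMap.const X t x) := by
    simp
  let G := Circle.isCoveringMap_exp.liftHomotopy H.symm.toContinuousMap _ hzero
  refine ⟨G.comp ⟨fun x => (1, x), by fun_prop⟩, fun x => ?_⟩
  have hlift := Circle.isCoveringMap_exp.liftHomotopy_lifts H.symm.toContinuousMap _ hzero
  exact (congrFun hlift (1, x)).trans (H.symm.apply_one x)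

lemma sub_eq_sub_of_circleExp_eq {M : Set X} (hM : IsPreconnected M) {θ g : X → ℝ}
    (hθ : ContinuousOn θ M) (hg : ContinuousOn g M)
    (h : ∀ z ∈ M, Circle.exp (θ z) = Circle.exp (g z)) {x y : X} (hx : x ∈ M) (hy : y ∈ M) :
    θ x - g x = θ y - g y := by
  have hexp : ∀ z ∈ M, Circle.exp (θ z - g z) = 1 := fun z hz => by
    rw [Circle.exp_sub, h z hz, div_self']
  exact Circle.isCoveringMap_exp.constOn_of_comp (g := fun z => θ z - g z) hM (hθ.sub hg)
    (fun a ha b hb => (hexp a ha).trans (hexp b hb).symm) hx hy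

lemma exists_reflected_log (hcirc : ∀ f : C(X, Circle), f.Nullhomotopic) {P : Set X} {v : X → ℝ}
    (hv : Continuous v) (hP : ∀ z ∈ frontier P, Circle.exp (v z) = Circle.exp (-v z)) :
    ∃ θ : C(X, ℝ), (∀ z ∈ P, Circle.exp (θ z) = Circle.exp (v z)) ∧
      ∀ z ∉ P, Circle.exp (θ z) = Circle.exp (-v z) := by
  classical
  let f : C(X, Circle) :=
    ⟨fun z => if z ∈ P then Circle.exp (v z) else Circle.exp (-v z),
      Continuous.if hP (by fun_prop) (by fun_prop)⟩
  obtain ⟨θ, hθ⟩ := exists_circleExp_eq_of_nullhomotopic (hcirc f)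
  exact ⟨θ, fun z hz => (hθ z).trans (if_pos hz), fun z hz => (hθ z).trans (if_neg hz)⟩

lemma sub_eq_of_reflected_log {M P : Set X} (hM : IsPreconnected M) {θ v : X → ℝ}
    (hθ : ContinuousOn θ M) (hv : Continuous v)
    (hθP : ∀ z ∈ P, Circle.exp (θ z) = Circle.exp (v z))
    (hθPc : ∀ z ∉ P, Circle.exp (θ z) = Circle.exp (-v z))
    {c : ℝ} (hc : Circle.exp c = 1) (hPM : ∀ z ∈ M ∩ frontier P, v z = c - v z)
    {x y : X} (hxM : x ∈ M) (hxP : x ∈ P) (hyM : y ∈ M) (hyP : y ∉ P) :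
    θ x - θ y = v x + v y - c := by
  classical
  -- The branches `v` and `c - v` of the logarithm fit together along `M ∩ frontier P`.
  let g : X → ℝ := fun z => if z ∈ P then v z else c - v z
  have hg : ContinuousOn g M := ContinuousOn.if hPM (by fun_prop) (by fun_prop)
  have hexp : ∀ z ∈ M, Circle.exp (θ z) = Circle.exp (g z) := fun z _ => by
    by_cases hz : z ∈ P
    · simp only [g, if_pos hz, hθP z hz]
    · simp only [g, if_neg hz, hθPc z hz, sub_eq_add_neg, Circle.exp_add, hc, one_mul]
  have hdiff := sub_eq_sub_of_circleExp_eq hM hθ hg hexp hxM hyM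
  simp only [g, if_pos hxP, if_neg hyP] at hdiff
  linarith

lemma mem_of_frontier_subset_union [NormalSpace X]
    (hcirc : ∀ f : C(X, Circle), f.Nullhomotopic) {E₁ E₂ P M₁ M₂ : Set X}
    (hE₁ : IsClosed E₁) (hE₂ : IsClosed E₂) (hE : Disjoint E₁ E₂) (hP : frontier P ⊆ E₁ ∪ E₂)
    (hM₁ : IsPreconnected M₁) (hM₁E : M₁ ⊆ E₁ᶜ) (hM₂ : IsPreconnected M₂) (hM₂E : M₂ ⊆ E₂ᶜ)
    {x y : X} (hxP : x ∈ P) (hx : x ∈ M₁ ∩ M₂) (hy : y ∈ M₁ ∩ M₂) : y ∈ P := by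
  by_contra hyP
  obtain ⟨u, hu₁, hu₂, -⟩ := exists_continuous_zero_one_of_isClosed hE₁ hE₂ hE
  let v : X → ℝ := fun z => Real.pi * u z
  have hv : Continuous v := by fun_prop
  have hv₁ : ∀ z ∈ E₁, v z = 0 := fun z hz => by simp [v, hu₁ hz]
  have hv₂ : ∀ z ∈ E₂, v z = Real.pi := fun z hz => by simp [v, hu₂ hz]
  have hπ : Circle.exp Real.pi = Circle.exp (-Real.pi) := by
    rw [← Circle.exp_sub_two_pi]
    ring_nf
  obtain ⟨θ, hθP, hθPc⟩ := exists_reflected_log hcirc (P := P) hv fun z hz => by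
    rcases hP hz with hz | hz
    · simp [hv₁ z hz]
    · rw [hv₂ z hz, hπ]
  have hdiff₁ : θ x - θ y = v x + v y - 2 * Real.pi :=
    sub_eq_of_reflected_log hM₁ θ.continuous.continuousOn hv hθP hθPc Circle.exp_two_pi
      (fun z hz => by
        rw [hv₂ z ((hP hz.2).resolve_left (hM₁E hz.1))]
        ring) hx.1 hxP hy.1 hyP
  have hdiff₂ : θ x - θ y = v x + v y - 0 :=
    sub_eq_of_reflected_log hM₂ θ.continuous.continuousOn hv hθP hθPc Circle.exp_zero
      (fun z hz => by
        rw [hv₁ z ((hP hz.2).resolve_right (hM₂E hz.1)), sub_zero]) hx.2 hxP hy.2 hyP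
  linarith [Real.pi_pos]

end CircleMaps

section Separation

variable {X : Type*} [TopologicalSpace X]

lemma SepPts.notMem_closure {E S : Set X} {x y : X} (h : SepPts E x y) (hS : IsPreconnected S)
    (hSE : S ⊆ Eᶜ) (hx : x ∈ closure S) : y ∉ closure S := by
  intro hy
  obtain ⟨hxE, hyE, hne⟩ := h
  have hpair : ({x, y} : Set X) ⊆ closure S := insert_subset hx (singleton_subset_iff.2 hy)
  have hT : IsPreconnected (S ∪ {x, y}) :=
    hS.subset_closure subset_union_left (union_subset subset_closure hpair)
  have hTE : S ∪ {x, y} ⊆ Eᶜ :=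
    union_subset hSE (insert_subset hxE (singleton_subset_iff.2 hyE))
  exact hne (connectedComponentIn_eq
    (hT.subset_connectedComponentIn (by simp) hTE (by simp : y ∈ S ∪ {x, y})))

lemma exists_isPreconnected_of_not_sepPts {E : Set X} {x y : X} (hx : x ∉ E) (hy : y ∉ E)
    (h : ¬SepPts E x y) : ∃ M ⊆ Eᶜ, IsPreconnected M ∧ x ∈ M ∧ y ∈ M := by
  have heq : connectedComponentIn Eᶜ x = connectedComponentIn Eᶜ y :=
    by_contra fun hne => h ⟨hx, hy, hne⟩
  exact ⟨connectedComponentIn Eᶜ x, connectedComponentIn_subset _ _,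
    isPreconnected_connectedComponentIn, mem_connectedComponentIn hx,
    heq ▸ mem_connectedComponentIn hy⟩

lemma SepPts.of_union [NormalSpace X] [LocallyConnectedSpace X]
    (hcirc : ∀ f : C(X, Circle), f.Nullhomotopic) {E₁ E₂ : Set X} (hE₁ : IsClosed E₁)
    (hE₂ : IsClosed E₂) (hE : Disjoint E₁ E₂) {x y : X} (h : SepPts (E₁ ∪ E₂) x y) :
    SepPts E₁ x y ∨ SepPts E₂ x y := by
  obtain ⟨hx, hy, hne⟩ := h
  by_contra! hnot
  obtain ⟨M₁, hM₁E, hM₁, hxM₁, hyM₁⟩ :=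
    exists_isPreconnected_of_not_sepPts (fun h => hx (.inl h)) (fun h => hy (.inl h)) hnot.1
  obtain ⟨M₂, hM₂E, hM₂, hxM₂, hyM₂⟩ :=
    exists_isPreconnected_of_not_sepPts (fun h => hx (.inr h)) (fun h => hy (.inr h)) hnot.2
  have hfrontier := frontier_connectedComponentIn_compl_subset (hE₁.union hE₂) x
  exact hne (connectedComponentIn_eq (mem_of_frontier_subset_union hcirc hE₁ hE₂ hE hfrontier
    hM₁ hM₁E hM₂ hM₂E (mem_connectedComponentIn hx) ⟨hxM₁, hxM₂⟩ ⟨hyM₁, hyM₂⟩))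

lemma isClosed_sUnion_of_finite {𝓑 : Set (Set X)} (hfin : 𝓑.Finite)
    (hclosed : ∀ B ∈ 𝓑, IsClosed B) : IsClosed (⋃₀ 𝓑) := by
  rw [sUnion_eq_biUnion]
  exact hfin.isClosed_biUnion hclosed

lemma SepPts.of_sUnion [NormalSpace X] [LocallyConnectedSpace X]
    (hcirc : ∀ f : C(X, Circle), f.Nullhomotopic) {𝓑 𝓒 : Set (Set X)} (hfin : 𝓑.Finite)
    (hclosed : ∀ B ∈ 𝓑, IsClosed B) (hdisj : ∀ D ∈ 𝓑 \ 𝓒, Disjoint (⋃₀ 𝓒) D) {x y : X}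
    (h : SepPts (⋃₀ 𝓑) x y) : SepPts (⋃₀ (𝓑 ∩ 𝓒)) x y ∨ SepPts (⋃₀ (𝓑 \ 𝓒)) x y := by
  rw [← inter_union_sdiff 𝓑 𝓒, sUnion_union] at h
  refine h.of_union hcirc
    (isClosed_sUnion_of_finite (hfin.inter_of_left 𝓒) fun B hB => hclosed B hB.1)
    (isClosed_sUnion_of_finite hfin.sdiff fun B hB => hclosed B hB.1) ?_
  exact (disjoint_sUnion_right.2 hdisj).mono_left (sUnion_subset_sUnion inter_subset_right)

end Separation

section UpperLimits

variable {X ι : Type*} [TopologicalSpace X]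

/-- The Kuratowski upper limit of the sets `S i` along the filter `l`: the points each of whose
neighbourhoods meets `S i` for `l`-frequently many `i`. -/
def upperLimit (l : Filter ι) (S : ι → Set X) : Set X :=
  {x | ∃ᶠ q in l ×ˢ 𝓝 x, q.2 ∈ S q.1}

lemma upperLimit_subset_closure {l : Filter ι} {S : ι → Set X} {T : Set X}
    (h : ∀ᶠ i in l, S i ⊆ T) : upperLimit l S ⊆ closure T := by
  intro x hx
  refine mem_closure_iff_frequently.2 fun hT => hx ?_
  filter_upwards [h.prod_mk hT] with q hq hqS using hq.2 (hq.1 hqS)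

lemma eventually_disjoint_of_disjoint_upperLimit {l : Filter ι} {S : ι → Set X} {K : Set X}
    (hK : IsCompact K) (h : Disjoint K (upperLimit l S)) : ∀ᶠ i in l, Disjoint K (S i) := by
  have hnear : {q : ι × X | q.2 ∉ S q.1} ∈ l ×ˢ 𝓝ˢ K :=
    hK.mem_prod_nhdsSet_of_forall fun x hx => not_frequently.1 (disjoint_left.1 h hx)
  obtain ⟨L, hL, N, hN, hLN⟩ := mem_prod_iff.1 hnear
  filter_upwards [hL] with i hi
  exact disjoint_left.2 fun x hxK => hLN (mk_mem_prod hi (subset_of_mem_nhdsSet hN hxK))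

lemma upperLimit_frontier_nontrivial [T2Space X] [WeaklyLocallyCompactSpace X]
    [LocallyConnectedSpace X] (hcut : ∀ x : X, IsPreconnected ({x}ᶜ : Set X)) {l : Filter ι}
    [l.NeBot] {W : ι → Set X} {A B : Set X} (hA : A.Nontrivial) (hB : B.Nontrivial)
    (hAW : ∀ᶠ i in l, Disjoint A (W i)) (hBW : ∀ᶠ i in l, B ⊆ W i) :
    (upperLimit l fun i => frontier (W i)).Nontrivial := by
  by_contra hL
  rw [not_nontrivial_iff] at hL
  obtain ⟨p, hp⟩ : ∃ p, (upperLimit l fun i => frontier (W i)) ⊆ {p} := by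
    rcases hL.eq_empty_or_singleton with h | ⟨p, h⟩
    · exact ⟨hA.nonempty.some, h ▸ empty_subset _⟩
    · exact ⟨p, h.subset⟩
  obtain ⟨a, ha, hap⟩ := hA.exists_ne p
  obtain ⟨b, hb, hbp⟩ := hB.exists_ne p
  obtain ⟨M, hMp, hM, hMconn, haM, hbM⟩ :=
    exists_isCompact_isPreconnected_of_isOpen (hcut p) isOpen_compl_singleton hap hbp
  have hMW : ∀ᶠ i in l, Disjoint M (frontier (W i)) :=
    eventually_disjoint_of_disjoint_upperLimit hM
      ((subset_compl_iff_disjoint_right.1 hMp).mono_right hp)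
  obtain ⟨i, hAi, hBi, hMi⟩ := (hAW.and (hBW.and hMW)).exists
  exact not_disjoint_iff_nonempty_inter.2
    (inter_frontier_nonempty hMconn ⟨b, hbM, hBi hb⟩ ⟨a, haM, disjoint_left.1 hAi ha⟩) hMi

lemma upperLimit_frontier_connectedComponentIn_subsingleton [LocallyConnectedSpace X] [Preorder ι]
    {E : ι → Set X} (hmono : Monotone E) (hclosed : ∀ i, IsClosed (E i))
    (hconn : IsPreconnected (⋃ i, E i))
    (hsep : ∀ x y, x ≠ y →
      (∃ i, SepPts (E i) x y) ∨ ∃ D, Disjoint (⋃ i, E i) D ∧ SepPts D x y) (b : X) :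
    (upperLimit atTop fun i => frontier (connectedComponentIn (E i)ᶜ b)).Subsingleton := by
  intro x hx y hy
  by_contra hxy
  rcases hsep x y hxy with ⟨i, h⟩ | ⟨D, hD, h⟩
  · have hsub : ∀ᶠ j in atTop, frontier (connectedComponentIn (E j)ᶜ b) ⊆
        closure (connectedComponentIn (E i)ᶜ b) := by
      filter_upwards [eventually_ge_atTop i] with j hij
      exact frontier_subset_closure.trans
        (closure_mono (connectedComponentIn_mono b (compl_subset_compl.2 (hmono hij))))
    have hlim := upperLimit_subset_closure hsub
    rw [closure_closure] at hlim
    exact h.notMem_closure isPreconnected_connectedComponentIn (connectedComponentIn_subset _ _)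
      (hlim hx) (hlim hy)
  · have hlim := upperLimit_subset_closure (l := atTop) (.of_forall fun i =>
      (frontier_connectedComponentIn_compl_subset (hclosed i) b).trans (subset_iUnion E i))
    exact h.notMem_closure hconn (subset_compl_iff_disjoint_right.2 hD) (hlim hx) (hlim hy)

lemma inter_iUnion_nonempty_of_sepPts [T2Space X] [WeaklyLocallyCompactSpace X]
    [LocallyConnectedSpace X] [Preorder ι] [IsDirectedOrder ι]
    (hcut : ∀ x : X, IsPreconnected ({x}ᶜ : Set X)) {E : ι → Set X} (hmono : Monotone E)
    (hclosed : ∀ i, IsClosed (E i)) (hconn : IsPreconnected (⋃ i, E i))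
    (hsep : ∀ x y, x ≠ y →
      (∃ i, SepPts (E i) x y) ∨ ∃ D, Disjoint (⋃ i, E i) D ∧ SepPts D x y)
    {A B : Set X} {i : ι} (hA : A.Nontrivial) (hAE : A ⊆ E i) (hB : B.Nontrivial)
    (hBconn : IsPreconnected B) : (B ∩ ⋃ i, E i).Nonempty := by
  rw [← not_disjoint_iff_nonempty_inter]
  intro hBE
  obtain ⟨b, hb⟩ := hB.nonempty
  have hAW : ∀ᶠ j in atTop, Disjoint A (connectedComponentIn (E j)ᶜ b) := by
    filter_upwards [eventually_ge_atTop i] with j hij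
    exact (subset_compl_iff_disjoint_left.1 (connectedComponentIn_subset _ b)).mono_left
      (hAE.trans (hmono hij))
  have hBW : ∀ j, B ⊆ connectedComponentIn (E j)ᶜ b := fun j =>
    hBconn.subset_connectedComponentIn hb
      (subset_compl_iff_disjoint_right.2 (hBE.mono_right (subset_iUnion E j)))
  have : Nonempty ι := ⟨i⟩
  exact (upperLimit_frontier_nontrivial hcut hA hB hAW (.of_forall hBW)).not_subsingleton
    (upperLimit_frontier_connectedComponentIn_subsingleton hmono hclosed hconn hsep b)

end UpperLimits

section FineFamilies

variable {X : Type*} [TopologicalSpace X]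

lemma eq_of_fine_of_isPreconnected_sUnion [T4Space X] [WeaklyLocallyCompactSpace X]
    [LocallyConnectedSpace X] (hcut : ∀ x : X, IsPreconnected ({x}ᶜ : Set X))
    (hcirc : ∀ f : C(X, Circle), f.Nullhomotopic) {𝓐 𝓒 : Set (Set X)}
    (hclosed : ∀ A ∈ 𝓐, IsClosed A) (hconn : ∀ A ∈ 𝓐, IsPreconnected A)
    (hbig : ∀ A ∈ 𝓐, A.Nontrivial)
    (hfine : ∀ x y : X, x ≠ y → ∃ 𝓑 ⊆ 𝓐, 𝓑.Finite ∧ SepPts (⋃₀ 𝓑) x y)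
    (h𝓒 : 𝓒 ⊆ 𝓐) (hne : 𝓒.Nonempty) (h𝓒conn : IsPreconnected (⋃₀ 𝓒))
    (hdisj : ∀ D ∈ 𝓐 \ 𝓒, Disjoint (⋃₀ 𝓒) D) : 𝓒 = 𝓐 := by
  by_contra h
  obtain ⟨A, hA⟩ := hne
  obtain ⟨B, hB⟩ : (𝓐 \ 𝓒).Nonempty := sdiff_nonempty.2 fun h' => h (h𝓒.antisymm h')
  let E : Finset (Set X) → Set X := fun F => ⋃₀ (F ∩ 𝓒)
  have hEmono : Monotone E := fun F G hFG =>
    sUnion_subset_sUnion (inter_subset_inter_left 𝓒 (Finset.coe_subset.2 hFG))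
  have hEclosed : ∀ F, IsClosed (E F) := fun F =>
    isClosed_sUnion_of_finite (F.finite_toSet.inter_of_left 𝓒) fun C hC => hclosed C (h𝓒 hC.2)
  have hEsingleton : ∀ C ∈ 𝓒, C ⊆ E {C} := fun C hC => subset_sUnion_of_mem ⟨by simp, hC⟩
  have hEunion : ⋃ F, E F = ⋃₀ 𝓒 :=
    (iUnion_subset fun F => sUnion_subset_sUnion inter_subset_right).antisymm
      (sUnion_subset fun C hC => subset_iUnion_of_subset {C} (hEsingleton C hC))
  have hEsep : ∀ x y, x ≠ y →
      (∃ F, SepPts (E F) x y) ∨ ∃ D, Disjoint (⋃ F, E F) D ∧ SepPts D x y := by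
    intro x y hxy
    obtain ⟨𝓑, h𝓑, hfin, hsep⟩ := hfine x y hxy
    have hdisj𝓑 : ∀ D ∈ 𝓑 \ 𝓒, Disjoint (⋃₀ 𝓒) D := fun D hD => hdisj D ⟨h𝓑 hD.1, hD.2⟩
    exact (hsep.of_sUnion hcirc hfin (fun C hC => hclosed C (h𝓑 hC)) hdisj𝓑).imp
      (fun h => ⟨hfin.toFinset, by simpa [E] using h⟩)
      (fun h => ⟨_, hEunion ▸ disjoint_sUnion_right.2 hdisj𝓑, h⟩)
  have hmeet := inter_iUnion_nonempty_of_sepPts hcut hEmono hEclosed (hEunion ▸ h𝓒conn) hEsep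
    (hbig A (h𝓒 hA)) (hEsingleton A hA) (hbig B hB.1) (hconn B hB.1)
  rw [hEunion, ← not_disjoint_iff_nonempty_inter] at hmeet
  exact hmeet (hdisj B hB).symm

end FineFamilies

section Crossing

variable {X : Type*} [TopologicalSpace X] {𝓐 : Set (Set X)} {A B C : Set X}

lemma Crosses.inter_nonempty (h : Crosses A B) (hB : IsPreconnected B) : (A ∩ B).Nonempty := by
  rcases h with h | ⟨⟨hBA, x, hx, y, hy, hne⟩, -⟩
  · exact h
  · exact (hne (connectedComponentIn_eq (hB.subset_connectedComponentIn hx hBA hy))).elim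

lemma CrossSeqFromTo.refl (hA : A ∈ 𝓐) : CrossSeqFromTo 𝓐 A A :=
  ⟨0, fun _ => A, rfl, rfl, fun _ _ => hA, fun _ h => absurd h (Nat.not_lt_zero _)⟩

lemma CrossSeqFromTo.tail (h : CrossSeqFromTo 𝓐 A B) (hC : C ∈ 𝓐) (hBC : Crosses B C) :
    CrossSeqFromTo 𝓐 A C := by
  obtain ⟨n, c, hstart, hend, hmem, hcross⟩ := h
  refine ⟨n + 1, fun i => if i ≤ n then c i else C, by simp [hstart], by simp, fun i _ => ?_,
    fun i hi => ?_⟩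
  · by_cases hin : i ≤ n
    · simpa [hin] using hmem i hin
    · simpa [hin] using hC
  · rcases Nat.lt_succ_iff_lt_or_eq.1 hi with hin | rfl
    · simpa [hin.le, Nat.succ_le_of_lt hin] using hcross i hin
    · simpa [hend] using hBC

/-- The crossing class of `A`: the sets reached from `A` by successively crossing members of `𝓐`.
It contains `A` even if `A ∉ 𝓐`. -/
def crossClass (𝓐 : Set (Set X)) (A : Set X) : Set (Set X) :=
  {C | Relation.ReflTransGen (fun B C => C ∈ 𝓐 ∧ Crosses B C) A C}

lemma crossSeqFromTo_of_mem_crossClass (hA : A ∈ 𝓐) (hB : B ∈ crossClass 𝓐 A) :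
    CrossSeqFromTo 𝓐 A B := by
  induction hB with
  | refl => exact .refl hA
  | tail _ h ih => exact ih.tail h.1 h.2

lemma crossClass_subset (hA : A ∈ 𝓐) : crossClass 𝓐 A ⊆ 𝓐 := by
  rintro B (_ | ⟨-, h⟩)
  exacts [hA, h.1]

lemma disjoint_sUnion_crossClass (hB : B ∈ 𝓐 \ crossClass 𝓐 A) :
    Disjoint (⋃₀ crossClass 𝓐 A) B := by
  refine disjoint_sUnion_left.2 fun C hC => ?_
  by_contra hCB
  exact hB.2 (hC.tail ⟨hB.1, .inl (not_disjoint_iff_nonempty_inter.1 hCB)⟩)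

lemma isConnected_sUnion_crossClass (hconn : ∀ A ∈ 𝓐, IsConnected A) (hA : A ∈ 𝓐) :
    IsConnected (⋃₀ crossClass 𝓐 A) := by
  have hjoin : ∀ B ∈ crossClass 𝓐 A,
      ∃ T ⊆ ⋃₀ crossClass 𝓐 A, A ⊆ T ∧ B ⊆ T ∧ IsPreconnected T := by
    intro B hB
    induction hB with
    | refl => exact ⟨A, subset_sUnion_of_mem .refl, subset_rfl, subset_rfl, (hconn A hA).2⟩
    | @tail B C hB hBC ih =>
      obtain ⟨T, hT, hAT, hBT, hTconn⟩ := ih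
      have hC := (hconn C hBC.1).isPreconnected
      obtain ⟨z, hzB, hzC⟩ := hBC.2.inter_nonempty hC
      exact ⟨T ∪ C, union_subset hT (subset_sUnion_of_mem (hB.tail hBC)),
        hAT.trans subset_union_left, subset_union_right, hTconn.union z (hBT hzB) hzC hC⟩
  obtain ⟨a, ha⟩ := (hconn A hA).nonempty
  refine ⟨⟨a, A, .refl, ha⟩, isPreconnected_of_forall a ?_⟩
  rintro y ⟨B, hB, hy⟩
  obtain ⟨T, hT, hAT, hBT, hTconn⟩ := hjoin B hB
  exact ⟨T, hT, hAT ha, hBT hy, hTconn⟩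

end Crossing

theorem family_cross_connected_general {X : Type*} [TopologicalSpace X] [T4Space X]
    [WeaklyLocallyCompactSpace X] [LocallyConnectedSpace X]
    (hcut : ∀ x : X, IsPreconnected ({x}ᶜ : Set X))
    (hcirc : ∀ f : C(X, Circle), f.Nullhomotopic)
    (𝓐 : Set (Set X))
    (hclosed : ∀ A ∈ 𝓐, IsClosed A) (hconn : ∀ A ∈ 𝓐, IsConnected A)
    (hbig : ∀ A ∈ 𝓐, A.Nontrivial)
    (hfine : ∀ x y : X, x ≠ y → ∃ 𝓑 ⊆ 𝓐, 𝓑.Finite ∧ SepPts (⋃₀ 𝓑) x y) :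
    CrossConnected 𝓐 := by
  intro A hA B hB
  have hclass : crossClass 𝓐 A = 𝓐 :=
    eq_of_fine_of_isPreconnected_sUnion hcut hcirc hclosed (fun C hC => (hconn C hC).isPreconnected)
      hbig hfine (crossClass_subset hA) ⟨A, .refl⟩
      (isConnected_sUnion_crossClass hconn hA).isPreconnected
      fun D hD => disjoint_sUnion_crossClass hD
  exact crossSeqFromTo_of_mem_crossClass hA (hclass.symm ▸ hB)

/-- A null and fine collection of connected closed subsets (each with at least two
points) of a Peano continuum without cut points admitting no essential map to the circle
is cross-connected. -/
theorem family_cross_connected {X : Type*} [MetricSpace X] [CompactSpace X]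
    [ConnectedSpace X] [LocallyConnectedSpace X]
    (hcut : ∀ x : X, IsPreconnected ({x}ᶜ : Set X))
    (hcirc : ∀ f : C(X, Circle), f.Nullhomotopic)
    (𝓐 : Set (Set X))
    (hclosed : ∀ A ∈ 𝓐, IsClosed A) (hconn : ∀ A ∈ 𝓐, IsConnected A)
    (hbig : ∀ A ∈ 𝓐, A.Nontrivial)
    (hnull : NullFam 𝓐) (hfine : FineFam 𝓐) :
    CrossConnected 𝓐 :=
  family_cross_connected_general hcut hcirc 𝓐 hclosed hconn hbig hfine
end
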